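/- arXiv:1906.03170 — 12 statements merged into one kernel-verified Lean document; each statement's English description precedes it below -/
import Mathlib

section
/- Let X ⊆ ℤⁿ be a digital image and k ≥ 3. The partial projection ρᶜ_k : S(X,k) → S(X,k−1) is well defined (takes values in S(X,k−1)) and is continuous: whenever y ∼ y' in S(X,k), then ρᶜ_k(y) ∼ ρᶜ_k(y') in S(X,k−1). -/
open Set

/-- Adjacency of points in `ℤⁿ`: all coordinates differ by at most 1. -/
def adj {n : ℕ} (x y : Fin n → ℤ) : Prop := ∀ i, |x i - y i| ≤ 1

/-- The `k`-subdivision of a digital image `X ⊆ ℤⁿ`. -/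
def Subdiv {n : ℕ} (X : Set (Fin n → ℤ)) (k : ℤ) : Set (Fin n → ℤ) :=
  { y | (fun i => (y i).fdiv k) ∈ X }

/-- One coordinate of the partial projection `ρᶜ_k`: the point `k*x + j`
(with `0 ≤ j ≤ k-1`) is sent to `(k-1)*x + j` if `j ≤ ⌊k/2⌋ - 1`, and to
`(k-1)*x + j - 1` if `⌊k/2⌋ ≤ j ≤ k-1`. -/
def rhoC1 (k y : ℤ) : ℤ :=
  if y % k ≤ k / 2 - 1 then (k - 1) * (y.fdiv k) + y % k
  else (k - 1) * (y.fdiv k) + y % k - 1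

/-- The partial projection `ρᶜ_k : S(X,k) → S(X,k-1)`, defined coordinatewise. -/
def rhoC {n : ℕ} (k : ℤ) (y : Fin n → ℤ) : Fin n → ℤ := fun i => rhoC1 k (y i)

theorem rhoC1_eq (k q r : ℤ) (hk : 3 ≤ k) (h0 : 0 ≤ r) (h1 : r < k) :
    rhoC1 k (k * q + r) = (k - 1) * q + (if r ≤ k / 2 - 1 then r else r - 1) := by
  have e1 : (k * q + r) % k = r := by
    rw [Int.mul_add_emod_self_left, Int.emod_eq_of_lt h0 h1]
  have e2 : (k * q + r) / k = q := by
    rw [Int.mul_add_ediv_left _ _ (by omega), Int.ediv_eq_zero_of_lt h0 h1, add_zero]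
  unfold rhoC1
  rw [Int.fdiv_eq_ediv_of_nonneg _ (by omega), e1, e2]
  split_ifs <;> ring

theorem rhoC1_fdiv (k y : ℤ) (hk : 3 ≤ k) : (rhoC1 k y).fdiv (k - 1) = y.fdiv k := by
  have h0 := Int.emod_nonneg y (show k ≠ 0 by omega)
  have h1 := Int.emod_lt_of_pos y (show 0 < k by omega)
  have h := rhoC1_eq k (y / k) (y % k) hk h0 h1
  rw [Int.mul_ediv_add_emod] at h
  rw [h, Int.fdiv_eq_ediv_of_nonneg _ (by omega), Int.fdiv_eq_ediv_of_nonneg _ (by omega),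
    Int.mul_add_ediv_left _ _ (by omega),
    Int.ediv_eq_zero_of_lt (a := if y % k ≤ k / 2 - 1 then y % k else y % k - 1), add_zero]
  · split_ifs <;> omega
  · split_ifs <;> omega

theorem rhoC1_succ (k y : ℤ) (hk : 3 ≤ k) :
    rhoC1 k y ≤ rhoC1 k (y + 1) ∧ rhoC1 k (y + 1) ≤ rhoC1 k y + 1 := by
  have h0 := Int.emod_nonneg y (show k ≠ 0 by omega)
  have h1 := Int.emod_lt_of_pos y (show 0 < k by omega)
  have hy := Int.mul_ediv_add_emod y k
  generalize y / k = q at *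
  generalize y % k = r at *
  subst hy
  rw [rhoC1_eq k q r hk h0 h1]
  by_cases hr : r + 1 < k
  · rw [add_assoc, rhoC1_eq k q (r + 1) hk (by omega) hr]
    split_ifs <;> constructor <;> linarith
  · have e : k * q + r + 1 = k * (q + 1) + 0 := by
      have : r = k - 1 := by omega
      subst this; ring
    rw [e, rhoC1_eq k (q + 1) 0 hk le_rfl (by omega), mul_add]
    split_ifs <;> constructor <;> omega

/-- for `k ≥ 3`, the partial projection `ρᶜ_k : S(X,k) → S(X,k-1)`
is well defined and continuous. -/
theorem rhoC_continuous {n : ℕ} (X : Set (Fin n → ℤ)) (hX : X.Finite)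
    (k : ℤ) (hk : 3 ≤ k) :
    (∀ y ∈ Subdiv X k, rhoC k y ∈ Subdiv X (k - 1)) ∧
    (∀ y ∈ Subdiv X k, ∀ y' ∈ Subdiv X k, adj y y' → adj (rhoC k y) (rhoC k y')) := by
  refine ⟨fun y hy => ?_, fun y _ y' _ h i => ?_⟩
  · simp only [Subdiv, Set.mem_ofPred_eq, rhoC, rhoC1_fdiv k _ hk] at hy ⊢
    exact hy
  · have hi := abs_le.mp (h i)
    simp only [rhoC]
    rw [abs_le]
    have hc : y i = y' i ∨ y i = y' i + 1 ∨ y' i = y i + 1 := by omega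
    rcases hc with e | e | e
    · rw [e]; omega
    · have := rhoC1_succ k (y' i) hk
      rw [e]; omega
    · have := rhoC1_succ k (y i) hk
      rw [e]; omega
end

section
/- Let X ⊆ ℤⁿ be a digital image and k ≥ 3. Then the standard projection factors through the partial projection: ρ_k = ρ_{k−1} ∘ ρᶜ_k : S(X,k) → S(X,k−1) → X. -/
open Set

/-- The standard projection `ρ_k`, coordinatewise floor-division by `k`. -/
def rho {n : ℕ} (k : ℤ) (y : Fin n → ℤ) : Fin n → ℤ := fun i => (y i).fdiv k

/-- for `k ≥ 3` the standard projection factors through the partial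
projection: `ρ_k = ρ_{k-1} ∘ ρᶜ_k` on `S(X,k)`. -/
theorem rho_factors_through_rhoC {n : ℕ} (X : Set (Fin n → ℤ)) (hX : X.Finite)
    (k : ℤ) (hk : 3 ≤ k) :
    ∀ y ∈ Subdiv X k, rho (k - 1) (rhoC k y) = rho k y := by
  intro y _
  funext i
  have hk0 : 0 ≤ k := by omega
  have hk1 : 0 ≤ k - 1 := by omega
  have h1 := Int.emod_nonneg (y i) (show k ≠ 0 by omega)
  have h2 := Int.emod_lt_of_pos (y i) (show 0 < k by omega)
  have key : ∀ q r : ℤ, 0 ≤ r → r < k - 1 → ((k - 1) * q + r) / (k - 1) = q := by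
    intro q r hr hr'
    rw [Int.mul_add_ediv_left _ _ (by omega), Int.ediv_eq_zero_of_lt hr hr', add_zero]
  simp only [rho, rhoC, rhoC1, Int.fdiv_eq_ediv_of_nonneg _ hk0,
    Int.fdiv_eq_ediv_of_nonneg _ hk1]
  split_ifs with h
  · exact key _ _ h1 (by omega)
  · rw [add_sub_assoc]
    exact key _ _ (by omega) (by omega)
end

section
/- Let α : I_N → Y be a path of length N in a digital image Y ⊆ ℤⁿ, and let k ≥ 1. Then the standard cover α̂ : I_{(2k+1)N+2k} → ℤⁿ of α takes all its values in S(Y, 2k+1), is continuous (α̂(j) ∼ α̂(j+1) for 0 ≤ j ≤ (2k+1)N+2k−1), satisfies ρ_{2k+1} ∘ α̂ = α ∘ ρ_{2k+1} (so the covering square commutes, with ρ_{2k+1} : S(I_N,2k+1) = I_{(2k+1)N+2k} → I_N on the left and ρ_{2k+1} : S(Y,2k+1) → Y on the right), and maps centres to centres: α̂(ī) = \overline{α(i)} for every i ∈ I_N. -/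
open Set

/-- The centre `ī = (2k+1)i + k` of `S(i, 2k+1) ⊆ ℤ`. -/
def bar (k i : ℤ) : ℤ := (2 * k + 1) * i + k

/-- The centre `ȳ = (2k+1)y + (k,…,k)` of `S(y, 2k+1) ⊆ ℤⁿ`. -/
def barPt {n : ℕ} (k : ℤ) (y : Fin n → ℤ) : Fin n → ℤ := fun i => (2 * k + 1) * y i + k

/-- The standard cover `α̂ : I_{(2k+1)N+2k} → ℤⁿ` of a path `α : I_N → Y ⊆ ℤⁿ`,
with respect to the odd subdivision factor `2k+1`:
`α̂(j) = \overline{α(0)}` for `0 ≤ j ≤ k-1`;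
`α̂(ī + t) = \overline{α(i)} + t (α(i+1) - α(i))` for `0 ≤ i ≤ N-1`, `0 ≤ t ≤ 2k`
(here `j = ī + t` has `i = (j-k) div (2k+1)` and `t = (j-k) mod (2k+1)`);
`α̂(j) = \overline{α(N)}` for `(2k+1)N + k ≤ j`. -/
def cover {n : ℕ} (k N : ℤ) (α : ℤ → Fin n → ℤ) (j : ℤ) : Fin n → ℤ :=
  if j ≤ k - 1 then barPt k (α 0)
  else if (2 * k + 1) * N + k ≤ j then barPt k (α N)
  else fun i =>
    barPt k (α ((j - k).fdiv (2 * k + 1))) i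
      + ((j - k) % (2 * k + 1)) *
          (α ((j - k).fdiv (2 * k + 1) + 1) i - α ((j - k).fdiv (2 * k + 1)) i)

theorem fdiv_unique {m a q r : ℤ} (h : a = m * q + r) (h0 : 0 ≤ r) (h1 : r < m) :
    a.fdiv m = q := by
  rw [Int.fdiv_eq_ediv_of_nonneg _ (by omega), h, add_comm,
    Int.add_mul_ediv_left _ _ (by omega), Int.ediv_eq_zero_of_lt h0 h1, zero_add]

theorem cover_low {n : ℕ} {k N : ℤ} (α : ℤ → Fin n → ℤ) {j : ℤ} (h : j ≤ k - 1) :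
    cover k N α j = barPt k (α 0) := by
  simp [cover, h]

theorem cover_high {n : ℕ} {k N : ℤ} (α : ℤ → Fin n → ℤ) {j : ℤ} (hN : 1 ≤ N) (hk : 1 ≤ k)
    (h : (2 * k + 1) * N + k ≤ j) : cover k N α j = barPt k (α N) := by
  have : ¬ j ≤ k - 1 := by nlinarith
  simp [cover, h, this]

theorem cover_mid {n : ℕ} {k N : ℤ} (α : ℤ → Fin n → ℤ) {i t : ℤ} (hk : 1 ≤ k)
    (hi : 0 ≤ i) (hiN : i < N) (ht : 0 ≤ t) (htk : t ≤ 2 * k + 1) (c : Fin n) :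
    cover k N α ((2 * k + 1) * i + k + t) c =
      (2 * k + 1) * α i c + k + t * (α (i + 1) c - α i c) := by
  have key : ∀ i t : ℤ, 0 ≤ i → i < N → 0 ≤ t → t ≤ 2 * k →
      cover k N α ((2 * k + 1) * i + k + t) c =
      (2 * k + 1) * α i c + k + t * (α (i + 1) c - α i c) := by
    intro i t hi hiN ht htk
    have h1 : ¬ (2 * k + 1) * i + k + t ≤ k - 1 := by nlinarith
    have h2 : ¬ (2 * k + 1) * N + k ≤ (2 * k + 1) * i + k + t := by nlinarith
    have h3 : ((2 * k + 1) * i + k + t - k).fdiv (2 * k + 1) = i :=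
      fdiv_unique (r := t) (by ring) ht (by omega)
    have h4 : ((2 * k + 1) * i + k + t - k) % (2 * k + 1) = t := by
      rw [show (2 * k + 1) * i + k + t - k = t + (2 * k + 1) * i by ring,
        Int.add_mul_emod_self_left, Int.emod_eq_of_lt ht (by omega)]
    simp only [cover, if_neg h1, if_neg h2, h3, h4, barPt]
  rcases Int.lt_or_le (2 * k) t with h | h
  · obtain rfl : t = 2 * k + 1 := by omega
    rcases Int.lt_or_le (i + 1) N with h' | h'
    · have := key (i + 1) 0 (by omega) h' le_rfl (by omega)
      rw [show (2 * k + 1) * i + k + (2 * k + 1) = (2 * k + 1) * (i + 1) + k + 0 by ring, this]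
      ring
    · obtain rfl : N = i + 1 := by omega
      rw [cover_high α (by omega) hk (by nlinarith)]
      simp only [barPt]; ring
  · exact key i t hi hiN ht h

theorem cover_cases {k N j : ℤ} (hk : 1 ≤ k) : j ≤ k - 1 ∨ (2 * k + 1) * N + k ≤ j ∨
    ∃ i t, 0 ≤ i ∧ i < N ∧ 0 ≤ t ∧ t ≤ 2 * k ∧ j = (2 * k + 1) * i + k + t := by
  by_cases h1 : j ≤ k - 1
  · exact Or.inl h1
  by_cases h2 : (2 * k + 1) * N + k ≤ j
  · exact Or.inr (Or.inl h2)
  have e := Int.mul_ediv_add_emod (j - k) (2 * k + 1)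
  have p := Int.emod_nonneg (j - k) (show 2 * k + 1 ≠ 0 by omega)
  have l := Int.emod_lt_of_pos (j - k) (show 0 < 2 * k + 1 by omega)
  refine Or.inr (Or.inr ⟨(j - k) / (2 * k + 1), (j - k) % (2 * k + 1),
    Int.ediv_nonneg (by omega) (by omega), ?_, p, by omega, by linarith⟩)
  exact Int.ediv_lt_of_lt_mul (by omega) (by linarith)

/-- the standard cover of a path `α : I_N → Y` takes values in
`S(Y, 2k+1)`, is continuous, covers `α` (i.e. `ρ_{2k+1} ∘ α̂ = α ∘ ρ_{2k+1}`),
and maps centres to centres. -/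
theorem standard_cover_covers {n : ℕ} (Y : Set (Fin n → ℤ)) (hY : Y.Finite)
    (N k : ℤ) (hN : 1 ≤ N) (hk : 1 ≤ k)
    (α : ℤ → Fin n → ℤ)
    (hmaps : ∀ i ∈ Icc (0 : ℤ) N, α i ∈ Y)
    (hcont : ∀ i ∈ Icc (0 : ℤ) N, ∀ i' ∈ Icc (0 : ℤ) N, |i - i'| ≤ 1 → adj (α i) (α i')) :
    (∀ j ∈ Icc (0 : ℤ) ((2 * k + 1) * N + 2 * k), cover k N α j ∈ Subdiv Y (2 * k + 1)) ∧
    (∀ j : ℤ, 0 ≤ j → j ≤ (2 * k + 1) * N + 2 * k - 1 →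
      adj (cover k N α j) (cover k N α (j + 1))) ∧
    (∀ j ∈ Icc (0 : ℤ) ((2 * k + 1) * N + 2 * k),
      rho (2 * k + 1) (cover k N α j) = α (j.fdiv (2 * k + 1))) ∧
    (∀ i ∈ Icc (0 : ℤ) N, cover k N α (bar k i) = barPt k (α i)) := by
  have hd : ∀ i, 0 ≤ i → i < N → ∀ c, -1 ≤ α (i + 1) c - α i c ∧ α (i + 1) c - α i c ≤ 1 := by
    intro i h0 h1 c
    have := hcont (i + 1) ⟨by omega, by omega⟩ i ⟨by omega, by omega⟩ (by simp) c
    exact abs_le.mp this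
  have hrho : ∀ j ∈ Icc (0 : ℤ) ((2 * k + 1) * N + 2 * k),
      rho (2 * k + 1) (cover k N α j) = α (j.fdiv (2 * k + 1)) := by
    rintro j ⟨hj0, hj1⟩
    funext c
    simp only [rho]
    rcases cover_cases (N := N) (j := j) hk with h | h | ⟨i, t, hi, hiN, ht, htk, rfl⟩
    · rw [cover_low α h, fdiv_unique (a := j) (q := 0) (r := j) (by ring) hj0 (by omega)]
      exact fdiv_unique (r := k) rfl (by omega) (by omega)
    · rw [cover_high α hN hk h, fdiv_unique (a := j) (q := N) (r := j - (2 * k + 1) * N)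
        (by ring) (by linarith) (by linarith)]
      exact fdiv_unique (r := k) rfl (by omega) (by omega)
    · rw [cover_mid α hk hi hiN ht (by omega)]
      obtain ⟨d0, d1⟩ := hd i hi hiN c
      rcases Int.lt_or_le k t with h | h
      · rw [fdiv_unique (a := (2 * k + 1) * i + k + t) (q := i + 1) (r := t - k - 1)
          (by ring) (by omega) (by omega)]
        refine fdiv_unique (r := k + (t - (2 * k + 1)) * (α (i + 1) c - α i c)) (by ring) ?_ ?_ <;>
          nlinarith
      · rw [fdiv_unique (a := (2 * k + 1) * i + k + t) (q := i) (r := k + t)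
          (by ring) (by omega) (by omega)]
        refine fdiv_unique (r := k + t * (α (i + 1) c - α i c)) (by ring) ?_ ?_ <;>
          nlinarith
  refine ⟨?_, ?_, hrho, ?_⟩
  · rintro j hj
    change rho (2 * k + 1) (cover k N α j) ∈ Y
    rw [hrho j hj]
    obtain ⟨hj0, hj1⟩ := hj
    apply hmaps
    rw [Int.fdiv_eq_ediv_of_nonneg _ (by omega)]
    refine ⟨Int.ediv_nonneg hj0 (by omega), ?_⟩
    have := Int.ediv_lt_of_lt_mul (a := j) (b := N + 1) (c := 2 * k + 1) (by omega) (by linarith)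
    omega
  · intro j hj0 hj1 c
    rcases cover_cases (N := N) (j := j) hk with h | h | ⟨i, t, hi, hiN, ht, htk, rfl⟩
    · rcases Int.lt_or_le (j + 1) k with h' | h'
      · rw [cover_low α h, cover_low α (by omega)]; simp
      · have := cover_mid α hk le_rfl (show 0 < N by omega) le_rfl (by omega) c
        rw [cover_low α h, show j + 1 = (2 * k + 1) * 0 + k + 0 by omega, this]
        simp [barPt]
    · rw [cover_high α hN hk h, cover_high α hN hk (by omega)]; simp
    · rw [add_assoc _ t 1, cover_mid α hk hi hiN ht (by omega),
        cover_mid α hk hi hiN (by omega) (by omega)]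
      obtain ⟨d0, d1⟩ := hd i hi hiN c
      rw [abs_le]
      constructor <;> linarith
  · rintro i ⟨hi0, hi1⟩
    rcases Int.lt_or_le i N with h | h
    · funext c
      have := cover_mid α hk hi0 h le_rfl (by omega) c
      simpa [bar, barPt] using this
    · obtain rfl : i = N := by omega
      exact cover_high α hN hk le_rfl
end

section
/- Let α : I_N → Y be a path of length N in a digital image Y ⊆ ℤⁿ, and let k ≥ 2. Then there exists a continuous map F : S(I_N, k+1) = I_{N(k+1)+k} → S(Y, k) covering α, i.e. ρ_k ∘ F = α ∘ ρ_{k+1} : S(I_N, k+1) → Y. -/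
open Set

/-- Offset inside the `q`-th block, at position `r`, for a coordinate sequence `a`. -/
def offs (k : ℤ) (a : ℤ → ℤ) (q r : ℤ) : ℤ :=
  if a q = a (q - 1) - 1 then
    (if a (q + 1) = a q + 1 then k - 1 else max (k - 1 - r) 0)
  else (if a (q + 1) = a q + 1 then min r (k - 1) else 0)

lemma offs_mem (k : ℤ) (hk : 2 ≤ k) (a : ℤ → ℤ) (q r : ℤ) (hr : 0 ≤ r) :
    0 ≤ offs k a q r ∧ offs k a q r < k := by
  unfold offs
  split_ifs <;> omega

lemma offs_step (k : ℤ) (a : ℤ → ℤ) (q r : ℤ) :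
    |offs k a q r - offs k a q (r + 1)| ≤ 1 := by
  rw [abs_le]
  unfold offs
  split_ifs <;> omega

lemma offs_jump (k : ℤ) (hk : 2 ≤ k) (a : ℤ → ℤ) (q : ℤ) (h : |a q - a (q + 1)| ≤ 1) :
    |(k * a q + offs k a q k) - (k * a (q + 1) + offs k a (q + 1) 0)| ≤ 1 := by
  rw [abs_le] at h ⊢
  have h3 : a (q + 1) = a q + 1 ∨ a (q + 1) = a q ∨ a (q + 1) = a q - 1 := by omega
  have e : q + 1 - 1 = q := by ring
  unfold offs
  rw [e]
  rcases h3 with h3 | h3 | h3 <;> rw [h3] <;> ring_nf <;> split_ifs <;> omega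

/-- for any path `α : I_N → Y` and any `k ≥ 2` there exists a
continuous map `F : S(I_N, k+1) = I_{N(k+1)+k} → S(Y, k)` covering `α`,
i.e. `ρ_k ∘ F = α ∘ ρ_{k+1}`. -/
theorem path_cover_exists {n : ℕ} (Y : Set (Fin n → ℤ)) (hY : Y.Finite)
    (N k : ℤ) (hN : 1 ≤ N) (hk : 2 ≤ k)
    (α : ℤ → Fin n → ℤ)
    (hmaps : ∀ i ∈ Icc (0 : ℤ) N, α i ∈ Y)
    (hcont : ∀ i ∈ Icc (0 : ℤ) N, ∀ i' ∈ Icc (0 : ℤ) N, |i - i'| ≤ 1 → adj (α i) (α i')) :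
    ∃ F : ℤ → Fin n → ℤ,
      (∀ j ∈ Icc (0 : ℤ) (N * (k + 1) + k), F j ∈ Subdiv Y k) ∧
      (∀ j ∈ Icc (0 : ℤ) (N * (k + 1) + k), ∀ j' ∈ Icc (0 : ℤ) (N * (k + 1) + k),
        |j - j'| ≤ 1 → adj (F j) (F j')) ∧
      (∀ j ∈ Icc (0 : ℤ) (N * (k + 1) + k), rho k (F j) = α (j.fdiv (k + 1))) := by
  have hk1 : (0 : ℤ) < k + 1 := by omega
  have fd : ∀ x : ℤ, x.fdiv (k + 1) = x / (k + 1) := fun x =>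
    Int.fdiv_eq_ediv_of_nonneg x hk1.le
  have fdk : ∀ x : ℤ, x.fdiv k = x / k := fun x =>
    Int.fdiv_eq_ediv_of_nonneg x (by omega)
  have hq : ∀ j ∈ Icc (0 : ℤ) (N * (k + 1) + k), j / (k + 1) ∈ Icc (0 : ℤ) N := by
    intro j hj
    refine ⟨Int.ediv_nonneg hj.1 hk1.le, ?_⟩
    have : j / (k + 1) < N + 1 := by
      rw [Int.ediv_lt_iff_lt_mul hk1]
      nlinarith [hj.2]
    omega
  let F : ℤ → Fin n → ℤ := fun j c =>
    k * α (j / (k + 1)) c + offs k (fun q => α q c) (j / (k + 1)) (j % (k + 1))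
  have hF : ∀ j, rho k (F j) = α (j.fdiv (k + 1)) := by
    intro j
    funext c
    have h0 := offs_mem k hk (fun q => α q c) (j / (k + 1)) (j % (k + 1))
      (Int.emod_nonneg _ hk1.ne')
    simp only [rho, F, fd, fdk]
    rw [Int.mul_add_ediv_left _ _ (by omega), Int.ediv_eq_zero_of_lt h0.1 h0.2, add_zero]
  have step : ∀ j ∈ Icc (0 : ℤ) (N * (k + 1) + k), j + 1 ∈ Icc (0 : ℤ) (N * (k + 1) + k) →
      adj (F j) (F (j + 1)) := by
    intro j hj hj' c
    have h1 := Int.emod_nonneg j hk1.ne'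
    have h2 := Int.emod_lt_of_pos j hk1
    have h3 := Int.mul_ediv_add_emod j (k + 1)
    by_cases hr : j % (k + 1) = k
    · have h4 : (j + 1) / (k + 1) = j / (k + 1) + 1 ∧ (j + 1) % (k + 1) = 0 := by
        rw [Int.ediv_emod_unique hk1]
        refine ⟨?_, le_rfl, hk1⟩
        linarith
      have h5 := hq _ hj
      have h6 := hq _ hj'
      rw [h4.1] at h6
      have h7 := hcont _ h5 _ h6 (by simp) c
      simp only [F, h4.1, h4.2, hr]
      exact offs_jump k hk (fun q => α q c) _ h7
    · have h4 : (j + 1) / (k + 1) = j / (k + 1) ∧ (j + 1) % (k + 1) = j % (k + 1) + 1 := by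
        rw [Int.ediv_emod_unique hk1]
        refine ⟨?_, by omega, by omega⟩
        linarith
      have h5 := offs_step k (fun q => α q c) (j / (k + 1)) (j % (k + 1))
      simp only [F, h4.1, h4.2]
      rwa [add_sub_add_left_eq_sub]
  refine ⟨F, ?_, ?_, fun j _ => hF j⟩
  · intro j hj
    change rho k (F j) ∈ Y
    rw [hF, fd]
    exact hmaps _ (hq j hj)
  · intro j hj j' hj' h
    rw [abs_le] at h
    have h3 : j' = j + 1 ∨ j' = j ∨ j = j' + 1 := by omega
    rcases h3 with rfl | rfl | rfl
    · exact step _ hj hj'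
    · intro c
      simp
    · intro c
      rw [abs_sub_comm]
      exact step _ hj' hj c
end

section
/- Let γ : I_N → Y be a loop of length N in a digital image Y ⊆ ℤⁿ, with γ(0) = γ(N) = y₀ ∈ Y, and let k ≥ 2. Let k' = k if k is odd and k' = k+1 if k is even. Then for every point z₀ ∈ S(y₀, k) = ρ_k^{-1}(y₀) there exists a continuous map Γ : S(I_N, k') = I_{Nk'+k'−1} → S(Y, k) covering γ (i.e. ρ_k ∘ Γ = γ ∘ ρ_{k'}) such that Γ is a loop based at z₀: Γ(0) = Γ(Nk'+k'−1) = z₀. -/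
open Set

/-- Move from `s` to `e` at unit speed, then stay. -/
def mv (s e r : ℤ) : ℤ := if s ≤ e then min (s + r) e else max (s - r) e

lemma one_dim (N k k' : ℤ) (hN : 1 ≤ N) (hk : 2 ≤ k) (hkk : k ≤ k') (g : ℤ → ℤ)
    (hg : ∀ i, 0 ≤ i → i + 1 ≤ N → |g i - g (i + 1)| ≤ 1) (z : ℤ)
    (h0 : z / k = g 0) (h1 : z / k = g N) :
    ∃ G : ℤ → ℤ,
      (∀ j, 0 ≤ j → j + 1 ≤ N * k' + k' - 1 → |G j - G (j + 1)| ≤ 1) ∧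
      (∀ j, G j / k = g (j / k')) ∧ G 0 = z ∧ G (N * k' + k' - 1) = z := by
  have hm0 := Int.emod_nonneg z (show k ≠ 0 by omega)
  have hm1 := Int.emod_lt_of_pos z (show 0 < k by omega)
  have hz := Int.mul_ediv_add_emod z k
  set m := z % k with hm
  obtain ⟨s, hs⟩ : ∃ s : ℤ → ℤ, ∀ i, s i =
    if i = 0 then m else if g i - g (i - 1) = -1 then k - 1 else 0 := ⟨_, fun _ => rfl⟩
  obtain ⟨e, he⟩ : ∃ e : ℤ → ℤ, ∀ i, e i =
    if i = N then m else if g (i + 1) - g i = 1 then k - 1 else 0 := ⟨_, fun _ => rfl⟩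
  have hsb : ∀ i, 0 ≤ s i ∧ s i ≤ k - 1 := by
    intro i; rw [hs]; split_ifs <;> omega
  have heb : ∀ i, 0 ≤ e i ∧ e i ≤ k - 1 := by
    intro i; rw [he]; split_ifs <;> omega
  have hkp : 0 < k' := by omega
  -- value at `q * k' + r`
  have hq : ∀ q r : ℤ, 0 ≤ r → r < k' → (q * k' + r) / k' = q ∧ (q * k' + r) % k' = r := by
    intro q r hr0 hr1
    rw [Int.ediv_emod_unique hkp]
    exact ⟨by ring, hr0, hr1⟩
  obtain ⟨G, hG⟩ : ∃ G : ℤ → ℤ, ∀ j, G j =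
    k * g (j / k') + mv (s (j / k')) (e (j / k')) (j % k') := ⟨_, fun _ => rfl⟩
  have hGq : ∀ q r : ℤ, 0 ≤ r → r < k' → G (q * k' + r) = k * g q + mv (s q) (e q) r := by
    intro q r hr0 hr1
    obtain ⟨a, b⟩ := hq q r hr0 hr1
    rw [hG, a, b]
  have mv0 : ∀ q, mv (s q) (e q) 0 = s q := by
    intro q; unfold mv; split_ifs <;> omega
  have mv1 : ∀ q, mv (s q) (e q) (k' - 1) = e q := by
    intro q; have := hsb q; have := heb q; unfold mv; split_ifs <;> omega
  refine ⟨G, ?_, ?_, ?_, ?_⟩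
  · intro j hj0 hj1
    have hr0 := Int.emod_nonneg j (show k' ≠ 0 by omega)
    have hr1 := Int.emod_lt_of_pos j hkp
    have hj := Int.mul_ediv_add_emod j k'
    have hq0 : 0 ≤ j / k' := Int.ediv_nonneg hj0 hkp.le
    generalize j / k' = q at *
    generalize j % k' = r at *
    have hjj : j = q * k' + r := by rw [← hj]; ring
    subst hjj
    rw [hGq q r hr0 hr1]
    by_cases hc : r + 1 < k'
    · rw [add_assoc, hGq q (r + 1) (by omega) hc, abs_le]
      unfold mv
      split_ifs <;> omega
    · have hr : r = k' - 1 := by omega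
      subst hr
      have hqN : q + 1 ≤ N := by
        by_contra hcon
        have : N ≤ q := by omega
        nlinarith
      rw [show q * k' + (k' - 1) + 1 = (q + 1) * k' + 0 by ring,
        hGq (q + 1) 0 le_rfl hkp, mv0, mv1, hs, he, if_neg (show ¬ (q + 1 = 0) by omega), if_neg (show ¬ (q = N) by omega),
        add_sub_cancel_right]
      have hgq := abs_le.1 (hg q hq0 hqN)
      have hcases : g (q + 1) = g q ∨ g (q + 1) = g q + 1 ∨ g (q + 1) = g q - 1 := by omega
      rw [abs_le]
      rcases hcases with h | h | h <;> rw [h] <;> split_ifs <;>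
        first | omega | (constructor <;> linarith)
  · intro j
    have hr0 := Int.emod_nonneg j (show k' ≠ 0 by omega)
    have h1 := hsb (j / k')
    have h2 := heb (j / k')
    rw [hG, Int.mul_add_ediv_left _ _ (by omega)]
    have : mv (s (j / k')) (e (j / k')) (j % k') / k = 0 := by
      apply Int.ediv_eq_zero_of_lt <;> unfold mv <;> split_ifs <;> omega
    omega
  · have := hGq 0 0 le_rfl hkp
    rw [mv0, hs, if_pos rfl, ← h0] at this
    simpa [hz] using this
  · have := hGq N (k' - 1) (by omega) (by omega)
    rw [mv1, he, if_pos rfl, ← h1, hz] at this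
    rwa [← add_sub_assoc] at this

/-- let `γ : I_N → Y` be a loop based at `y₀`, `k ≥ 2`, and
`k' = k` if `k` is odd, `k' = k+1` if `k` is even.  Then for every
`z₀ ∈ S(y₀,k)` there is a continuous map `Γ : S(I_N,k') = I_{Nk'+k'-1} → S(Y,k)`
covering `γ` which is a loop based at `z₀`. -/
theorem loop_cover_exists {n : ℕ} (Y : Set (Fin n → ℤ)) (hY : Y.Finite)
    (N k : ℤ) (hN : 1 ≤ N) (hk : 2 ≤ k)
    (k' : ℤ) (hk' : k' = if k % 2 = 1 then k else k + 1)
    (γ : ℤ → Fin n → ℤ) (y₀ : Fin n → ℤ)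
    (hmaps : ∀ i ∈ Icc (0 : ℤ) N, γ i ∈ Y)
    (hcont : ∀ i ∈ Icc (0 : ℤ) N, ∀ i' ∈ Icc (0 : ℤ) N, |i - i'| ≤ 1 → adj (γ i) (γ i'))
    (h0 : γ 0 = y₀) (hNend : γ N = y₀) :
    ∀ z₀ : Fin n → ℤ, rho k z₀ = y₀ →
      ∃ Γ : ℤ → Fin n → ℤ,
        (∀ j ∈ Icc (0 : ℤ) (N * k' + k' - 1), Γ j ∈ Subdiv Y k) ∧
        (∀ j ∈ Icc (0 : ℤ) (N * k' + k' - 1), ∀ j' ∈ Icc (0 : ℤ) (N * k' + k' - 1),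
          |j - j'| ≤ 1 → adj (Γ j) (Γ j')) ∧
        (∀ j ∈ Icc (0 : ℤ) (N * k' + k' - 1), rho k (Γ j) = γ (j.fdiv k')) ∧
        Γ 0 = z₀ ∧ Γ (N * k' + k' - 1) = z₀ := by
  intro z₀ hz₀
  have hkk : k ≤ k' := by rw [hk']; split_ifs <;> omega
  clear hk'
  have hfd : ∀ (a b : ℤ), 2 ≤ b → a.fdiv b = a / b :=
    fun a b hb => Int.fdiv_eq_ediv_of_nonneg a (by omega)
  have key : ∀ i, ∃ G : ℤ → ℤ,
      (∀ j, 0 ≤ j → j + 1 ≤ N * k' + k' - 1 → |G j - G (j + 1)| ≤ 1) ∧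
      (∀ j, G j / k = γ (j / k') i) ∧ G 0 = z₀ i ∧ G (N * k' + k' - 1) = z₀ i := by
    intro i
    have hzi : z₀ i / k = y₀ i := by rw [← hz₀, rho, hfd _ _ hk]
    apply one_dim N k k' hN hk hkk (fun t => γ t i)
    · intro t ht0 ht1
      exact hcont t ⟨ht0, by omega⟩ (t + 1) ⟨by omega, ht1⟩ (by simp) i
    · rw [hzi, h0]
    · rw [hzi, hNend]
  choose G hG1 hG2 hG3 hG4 using key
  have hrho : ∀ j, rho k (fun i => G i j) = γ (j.fdiv k') := by
    intro j
    funext i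
    rw [rho, hfd _ _ hk, hfd _ _ (by omega), hG2]
  refine ⟨fun j i => G i j, ?_, ?_, fun j _ => hrho j, funext hG3, funext hG4⟩
  · intro j hj
    change rho k (fun i => G i j) ∈ Y
    rw [hrho, hfd _ _ (by omega)]
    apply hmaps
    refine ⟨Int.ediv_nonneg hj.1 (by omega), ?_⟩
    have : j / k' < N + 1 := by
      apply Int.ediv_lt_of_lt_mul (by omega)
      have := hj.2
      linarith
    omega
  · intro j hj j' hj' hjj i
    have := abs_le.1 hjj
    have hcases : j' = j ∨ j' = j + 1 ∨ j = j' + 1 := by omega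
    rcases hcases with h | h | h
    · subst h; simp
    · subst h; exact hG1 i j hj.1 hj'.2
    · subst h; rw [abs_sub_comm]; exact hG1 i j' hj'.1 hj.2
end

section
/- Let H : I_M × I_N → Y be a continuous map, where Y ⊆ ℤⁿ is a digital image and I_M × I_N ⊆ ℤ² carries the product adjacency, and let k ≥ 1. Then there exists a continuous map Ĥ : S(I_M, 2k+1) × S(I_N, 2k+1) → S(Y, 2k+1) covering H, i.e. ρ_{2k+1} ∘ Ĥ = H ∘ (ρ_{2k+1} × ρ_{2k+1}), whose restrictions to the four edges are the standard covers of the corresponding edge paths of H: Ĥ(s, 0) = α̂₀(s) and Ĥ(s, (2k+1)N+2k) = α̂_N(s) for all s ∈ I_{(2k+1)M+2k}, where α₀(i) = H(i,0) and α_N(i) = H(i,N); and Ĥ(0, t) = β̂₀(t) and Ĥ((2k+1)M+2k, t) = β̂_M(t) for all t ∈ I_{(2k+1)N+2k}, where β₀(j) = H(0,j) and β_M(j) = H(M,j). -/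
open Set

set_option linter.unusedSimpArgs false

/-- Clamp an integer to `[0, M]`. -/
def rcClamp (M i : ℤ) : ℤ := max 0 (min i M)

/-- Interpolation on a cell with `0/1` corner values `a = (0,0)`, `b = (1,0)`, `c = (0,1)`,
`d = (1,1)`. -/
def rcUnit (K a b c d u v : ℤ) : ℤ :=
  if a = 1 then
    if b = 1 then
      if c = 1 then (if d = 1 then K else max (K - u) (K - v))
      else (if d = 1 then max u (K - v) else K - v)
    else
      if c = 1 then (if d = 1 then max (K - u) v else K - u)
      else (if d = 1 then max (min (K - u) (K - v)) (min u v) else min (K - u) (K - v))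
  else
    if b = 1 then
      if c = 1 then (if d = 1 then max u v else max (min u (K - v)) (min (K - u) v))
      else (if d = 1 then u else min u (K - v))
    else
      if c = 1 then (if d = 1 then v else min (K - u) v)
      else (if d = 1 then min u v else 0)

def rcMin (A B C D : ℤ) : ℤ := min (min A B) (min C D)

/-- Interpolation on a cell with arbitrary pairwise adjacent corner values. -/
def rcCell (k A B C D u v : ℤ) : ℤ :=
  (2 * k + 1) * rcMin A B C D + k +
    rcUnit (2 * k + 1) (A - rcMin A B C D) (B - rcMin A B C D) (C - rcMin A B C D)
      (D - rcMin A B C D) u v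

def rcNear (A B C D : ℤ) : Prop :=
  |A - B| ≤ 1 ∧ |A - C| ≤ 1 ∧ |A - D| ≤ 1 ∧ |B - C| ≤ 1 ∧ |B - D| ≤ 1 ∧ |C - D| ≤ 1

theorem rcNear_norm {A B C D : ℤ} (h : rcNear A B C D) : ∃ m a b c d : ℤ,
    rcMin A B C D = m ∧ A = m + a ∧ B = m + b ∧ C = m + c ∧ D = m + d ∧
    (a = 0 ∨ a = 1) ∧ (b = 0 ∨ b = 1) ∧ (c = 0 ∨ c = 1) ∧ (d = 0 ∨ d = 1) := by
  obtain ⟨h1, h2, h3, h4, h5, h6⟩ := h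
  rw [abs_le] at *
  refine ⟨rcMin A B C D, A - rcMin A B C D, B - rcMin A B C D, C - rcMin A B C D,
    D - rcMin A B C D, rfl, by ring, by ring, by ring, by ring, ?_, ?_, ?_, ?_⟩ <;>
  unfold rcMin <;> omega

theorem rcCell_norm {A B C D : ℤ} (h : rcNear A B C D) : ∃ m a b c d : ℤ,
    A = m + a ∧ B = m + b ∧ C = m + c ∧ D = m + d ∧
    (a = 0 ∨ a = 1) ∧ (b = 0 ∨ b = 1) ∧ (c = 0 ∨ c = 1) ∧ (d = 0 ∨ d = 1) ∧
    ∀ k u v, rcCell k A B C D u v = (2 * k + 1) * m + k + rcUnit (2 * k + 1) a b c d u v := by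
  obtain ⟨m, a, b, c, d, hm, hA, hB, hC, hD, h⟩ := rcNear_norm h
  refine ⟨m, a, b, c, d, hA, hB, hC, hD, h.1, h.2.1, h.2.2.1, h.2.2.2, ?_⟩
  intro k u v
  unfold rcCell
  rw [hm, hA, hB, hC, hD]
  simp

set_option maxHeartbeats 4000000 in
theorem rcUnit_lip {K a b c d u v u' v' : ℤ}
    (ha : a = 0 ∨ a = 1) (hb : b = 0 ∨ b = 1) (hc : c = 0 ∨ c = 1) (hd : d = 0 ∨ d = 1)
    (hu : |u - u'| ≤ 1) (hv : |v - v'| ≤ 1) :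
    |rcUnit K a b c d u v - rcUnit K a b c d u' v'| ≤ 1 := by
  rw [abs_le] at *
  rcases ha with rfl | rfl <;> rcases hb with rfl | rfl <;> rcases hc with rfl | rfl <;>
    rcases hd with rfl | rfl <;> simp only [rcUnit, zero_ne_one, if_true, if_false, mul_zero, mul_one, add_zero, sub_self, sub_zero,
      zero_sub, mul_neg, add_sub_cancel_left, add_sub_add_left_eq_sub, reduceIte] <;> (first | omega | (refine ⟨?_, ?_, ?_, ?_⟩ <;> first | trivial | omega))

theorem rcCell_lip {k A B C D u v u' v' : ℤ} (h : rcNear A B C D)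
    (hu : |u - u'| ≤ 1) (hv : |v - v'| ≤ 1) :
    |rcCell k A B C D u v - rcCell k A B C D u' v'| ≤ 1 := by
  obtain ⟨m, a, b, c, d, -, -, -, -, ha, hb, hc, hd, hF⟩ := rcCell_norm h
  rw [hF, hF]
  simpa using rcUnit_lip (K := 2 * k + 1) ha hb hc hd hu hv

set_option maxHeartbeats 4000000 in
theorem rcCell_edges {k A B C D u v : ℤ} (h : rcNear A B C D)
    (hu : 0 ≤ u ∧ u ≤ 2 * k + 1) (hv : 0 ≤ v ∧ v ≤ 2 * k + 1) :
    rcCell k A B C D 0 v = (2 * k + 1) * A + k + v * (C - A) ∧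
    rcCell k A B C D (2 * k + 1) v = (2 * k + 1) * B + k + v * (D - B) ∧
    rcCell k A B C D u 0 = (2 * k + 1) * A + k + u * (B - A) ∧
    rcCell k A B C D u (2 * k + 1) = (2 * k + 1) * C + k + u * (D - C) := by
  obtain ⟨m, a, b, c, d, rfl, rfl, rfl, rfl, ha, hb, hc, hd, hF⟩ := rcCell_norm h
  simp only [hF, mul_add, add_sub_add_left_eq_sub]
  generalize (2 * k + 1) * m = P
  rcases ha with rfl | rfl <;> rcases hb with rfl | rfl <;> rcases hc with rfl | rfl <;>
    rcases hd with rfl | rfl <;> simp only [rcUnit, zero_ne_one, if_true, if_false, mul_zero, mul_one, add_zero, sub_self, sub_zero,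
      zero_sub, mul_neg, add_sub_cancel_left, add_sub_add_left_eq_sub, reduceIte] <;> (first | omega | (refine ⟨?_, ?_, ?_, ?_⟩ <;> first | trivial | omega))

theorem rcCell_const_v {k A B u v : ℤ} (h : |A - B| ≤ 1)
    (hu : 0 ≤ u ∧ u ≤ 2 * k + 1) (hv : 0 ≤ v ∧ v ≤ 2 * k + 1) :
    rcCell k A B A B u v = (2 * k + 1) * A + k + u * (B - A) := by
  have h' : rcNear A B A B := by
    unfold rcNear; simp only [abs_le] at *; omega
  obtain ⟨m, a, b, c, d, rfl, rfl, hC, hD, ha, hb, hc, hd, hF⟩ := rcCell_norm h'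
  obtain rfl : a = c := by omega
  obtain rfl : b = d := by omega
  simp only [hF, mul_add, add_sub_add_left_eq_sub]
  generalize (2 * k + 1) * m = P
  rcases ha with rfl | rfl <;> rcases hb with rfl | rfl <;> simp only [rcUnit, zero_ne_one, if_true, if_false, mul_zero, mul_one, add_zero, sub_self, sub_zero,
      zero_sub, mul_neg, add_sub_cancel_left, add_sub_add_left_eq_sub, reduceIte] <;> (first | omega | (refine ⟨?_, ?_, ?_, ?_⟩ <;> first | trivial | omega))

theorem rcCell_const_u {k A C u v : ℤ} (h : |A - C| ≤ 1)
    (hu : 0 ≤ u ∧ u ≤ 2 * k + 1) (hv : 0 ≤ v ∧ v ≤ 2 * k + 1) :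
    rcCell k A A C C u v = (2 * k + 1) * A + k + v * (C - A) := by
  have h' : rcNear A A C C := by
    unfold rcNear; simp only [abs_le] at *; omega
  obtain ⟨m, a, b, c, d, rfl, hB, rfl, hD, ha, hb, hc, hd, hF⟩ := rcCell_norm h'
  obtain rfl : a = b := by omega
  obtain rfl : c = d := by omega
  simp only [hF, mul_add, add_sub_add_left_eq_sub]
  generalize (2 * k + 1) * m = P
  rcases ha with rfl | rfl <;> rcases hc with rfl | rfl <;> simp only [rcUnit, zero_ne_one, if_true, if_false, mul_zero, mul_one, add_zero, sub_self, sub_zero,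
      zero_sub, mul_neg, add_sub_cancel_left, add_sub_add_left_eq_sub, reduceIte] <;> (first | omega | (refine ⟨?_, ?_, ?_, ?_⟩ <;> first | trivial | omega))

set_option maxHeartbeats 4000000 in
theorem rcCell_floor {k A B C D u v : ℤ} (hk : 1 ≤ k) (h : rcNear A B C D)
    (hu : 0 ≤ u ∧ u ≤ 2 * k + 1) (hv : 0 ≤ v ∧ v ≤ 2 * k + 1) (X : ℤ)
    (hX : X = if u ≤ k then (if v ≤ k then A else C) else (if v ≤ k then B else D)) :
    (rcCell k A B C D u v).fdiv (2 * k + 1) = X := by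
  rw [Int.fdiv_eq_ediv_of_nonneg _ (by omega)]
  have key : (2 * k + 1) * X ≤ rcCell k A B C D u v ∧
      rcCell k A B C D u v < (2 * k + 1) * X + (2 * k + 1) := by
    subst hX
    obtain ⟨m, a, b, c, d, rfl, rfl, rfl, rfl, ha, hb, hc, hd, hF⟩ := rcCell_norm h
    rw [hF]
    split_ifs <;> rw [mul_add] <;> generalize (2 * k + 1) * m = P <;>
    rcases ha with rfl | rfl <;> rcases hb with rfl | rfl <;> rcases hc with rfl | rfl <;>
      rcases hd with rfl | rfl <;> simp only [rcUnit, zero_ne_one, if_true, if_false, mul_zero, mul_one, add_zero, sub_self, sub_zero,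
      zero_sub, mul_neg, add_sub_cancel_left, add_sub_add_left_eq_sub, reduceIte] <;> (first | omega | (refine ⟨?_, ?_, ?_, ?_⟩ <;> first | trivial | omega))
  rw [Int.ediv_eq_iff_of_pos (by omega)]
  constructor <;> nlinarith [key.1, key.2]

theorem rc_div {K i u : ℤ} (hu : 0 ≤ u) (hu' : u < K) :
    (K * i + u) / K = i ∧ (K * i + u) % K = u := by
  have hK : 0 < K := by omega
  constructor
  · rw [Int.add_comm, Int.add_mul_ediv_left _ _ (by omega), Int.ediv_eq_zero_of_lt hu hu']; simp
  · rw [Int.add_comm, Int.add_mul_emod_self_left, Int.emod_eq_of_lt hu hu']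

/-- The scalar cover. -/
def rcHat (k : ℤ) (h : ℤ → ℤ → ℤ) (s t : ℤ) : ℤ :=
  rcCell k (h ((s - k) / (2 * k + 1)) ((t - k) / (2 * k + 1)))
    (h ((s - k) / (2 * k + 1) + 1) ((t - k) / (2 * k + 1)))
    (h ((s - k) / (2 * k + 1)) ((t - k) / (2 * k + 1) + 1))
    (h ((s - k) / (2 * k + 1) + 1) ((t - k) / (2 * k + 1) + 1))
    ((s - k) % (2 * k + 1)) ((t - k) % (2 * k + 1))

def rcCont (h : ℤ → ℤ → ℤ) : Prop :=
  ∀ i j i' j', |i - i'| ≤ 1 → |j - j'| ≤ 1 → |h i j - h i' j'| ≤ 1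

theorem rcCont.near {h : ℤ → ℤ → ℤ} (hh : rcCont h) (i j : ℤ) :
    rcNear (h i j) (h (i + 1) j) (h i (j + 1)) (h (i + 1) (j + 1)) := by
  refine ⟨?_, ?_, ?_, ?_, ?_, ?_⟩ <;> apply hh <;> rw [abs_le] <;> omega

theorem rcHat_open (k : ℤ) (h : ℤ → ℤ → ℤ) (i j u v : ℤ)
    (hu : 0 ≤ u ∧ u < 2 * k + 1) (hv : 0 ≤ v ∧ v < 2 * k + 1) :
    rcHat k h ((2 * k + 1) * i + k + u) ((2 * k + 1) * j + k + v) =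
      rcCell k (h i j) (h (i + 1) j) (h i (j + 1)) (h (i + 1) (j + 1)) u v := by
  unfold rcHat
  have e1 : (2 * k + 1) * i + k + u - k = (2 * k + 1) * i + u := by ring
  have e2 : (2 * k + 1) * j + k + v - k = (2 * k + 1) * j + v := by ring
  rw [e1, e2, (rc_div hu.1 hu.2).1, (rc_div hu.1 hu.2).2, (rc_div hv.1 hv.2).1,
    (rc_div hv.1 hv.2).2]

theorem rcHat_halfclosed {k : ℤ} (hk : 1 ≤ k) {h : ℤ → ℤ → ℤ} (hh : rcCont h) (i j u v : ℤ)
    (hu : 0 ≤ u ∧ u ≤ 2 * k + 1) (hv : 0 ≤ v ∧ v < 2 * k + 1) :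
    rcHat k h ((2 * k + 1) * i + k + u) ((2 * k + 1) * j + k + v) =
      rcCell k (h i j) (h (i + 1) j) (h i (j + 1)) (h (i + 1) (j + 1)) u v := by
  rcases lt_or_eq_of_le hu.2 with h1 | h1
  · exact rcHat_open k h i j u v ⟨hu.1, h1⟩ hv
  · have e : (2 * k + 1) * i + k + u = (2 * k + 1) * (i + 1) + k + 0 := by rw [h1]; ring
    rw [e, rcHat_open k h (i + 1) j 0 v (by omega) hv, h1,
      (rcCell_edges (hh.near (i + 1) j) hu ⟨hv.1, hv.2.le⟩).1,
      (rcCell_edges (hh.near i j) hu ⟨hv.1, hv.2.le⟩).2.1]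

theorem rcHat_closed {k : ℤ} (hk : 1 ≤ k) {h : ℤ → ℤ → ℤ} (hh : rcCont h) (i j u v : ℤ)
    (hu : 0 ≤ u ∧ u ≤ 2 * k + 1) (hv : 0 ≤ v ∧ v ≤ 2 * k + 1) :
    rcHat k h ((2 * k + 1) * i + k + u) ((2 * k + 1) * j + k + v) =
      rcCell k (h i j) (h (i + 1) j) (h i (j + 1)) (h (i + 1) (j + 1)) u v := by
  rcases lt_or_eq_of_le hv.2 with h1 | h1
  · exact rcHat_halfclosed hk hh i j u v hu ⟨hv.1, h1⟩
  · have e : (2 * k + 1) * j + k + v = (2 * k + 1) * (j + 1) + k + 0 := by rw [h1]; ring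
    rw [e, rcHat_halfclosed hk hh i (j + 1) u 0 hu (by omega), h1,
      (rcCell_edges (hh.near i (j + 1)) hu hv).2.2.1,
      (rcCell_edges (hh.near i j) hu hv).2.2.2]

theorem rc_common {k s s' : ℤ} (hk : 1 ≤ k) (h : |s - s'| ≤ 1) : ∃ i u u',
    s = (2 * k + 1) * i + k + u ∧ s' = (2 * k + 1) * i + k + u' ∧
    (0 ≤ u ∧ u ≤ 2 * k + 1) ∧ (0 ≤ u' ∧ u' ≤ 2 * k + 1) ∧ |u - u'| ≤ 1 := by
  have h1 := Int.mul_ediv_add_emod (min s s' - k) (2 * k + 1)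
  have h2 := Int.emod_nonneg (min s s' - k) (b := 2 * k + 1) (by omega)
  have h3 := Int.emod_lt_of_pos (min s s' - k) (b := 2 * k + 1) (by omega)
  refine ⟨(min s s' - k) / (2 * k + 1), s - k - (2 * k + 1) * ((min s s' - k) / (2 * k + 1)),
    s' - k - (2 * k + 1) * ((min s s' - k) / (2 * k + 1)), by ring, by ring, ?_⟩
  generalize (2 * k + 1) * ((min s s' - k) / (2 * k + 1)) = P at *
  generalize (min s s' - k) % (2 * k + 1) = R at *
  rw [abs_le] at *
  omega

theorem rcHat_lip {k : ℤ} (hk : 1 ≤ k) {h : ℤ → ℤ → ℤ} (hh : rcCont h) {s t s' t' : ℤ}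
    (hs : |s - s'| ≤ 1) (ht : |t - t'| ≤ 1) : |rcHat k h s t - rcHat k h s' t'| ≤ 1 := by
  obtain ⟨i, u, u', rfl, rfl, hu, hu', huu⟩ := rc_common hk hs
  obtain ⟨j, v, v', rfl, rfl, hv, hv', hvv⟩ := rc_common hk ht
  rw [rcHat_closed hk hh i j u v hu hv, rcHat_closed hk hh i j u' v' hu' hv']
  exact rcCell_lip (hh.near i j) huu hvv

theorem rc_split {k : ℤ} (hk : 1 ≤ k) (s : ℤ) : ∃ i u, s = (2 * k + 1) * i + k + u ∧
    0 ≤ u ∧ u < 2 * k + 1 ∧ s / (2 * k + 1) = if u ≤ k then i else i + 1 := by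
  have h1 := Int.mul_ediv_add_emod (s - k) (2 * k + 1)
  have h2 := Int.emod_nonneg (s - k) (b := 2 * k + 1) (by omega)
  have h3 := Int.emod_lt_of_pos (s - k) (b := 2 * k + 1) (by omega)
  refine ⟨(s - k) / (2 * k + 1), (s - k) % (2 * k + 1), by linarith, h2, h3, ?_⟩
  generalize (s - k) / (2 * k + 1) = i at *
  generalize (s - k) % (2 * k + 1) = u at *
  rw [Int.ediv_eq_iff_of_pos (by omega)]
  split_ifs <;> constructor <;> nlinarith

theorem rcHat_floor {k : ℤ} (hk : 1 ≤ k) {h : ℤ → ℤ → ℤ} (hh : rcCont h) (s t : ℤ) :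
    (rcHat k h s t).fdiv (2 * k + 1) = h (s / (2 * k + 1)) (t / (2 * k + 1)) := by
  obtain ⟨i, u, hs, hu, hu', h1⟩ := rc_split hk s
  obtain ⟨j, v, ht, hv, hv', h2⟩ := rc_split hk t
  rw [h1, h2, hs, ht, rcHat_open k h i j u v ⟨hu, hu'⟩ ⟨hv, hv'⟩]
  apply rcCell_floor hk (hh.near i j) ⟨hu, hu'.le⟩ ⟨hv, hv'.le⟩
  split_ifs <;> rfl

theorem rcClamp_mem {M : ℤ} (hM : 1 ≤ M) (i : ℤ) : rcClamp M i ∈ Icc (0 : ℤ) M := by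
  simp only [rcClamp, mem_Icc]; omega

theorem rcClamp_lip {M i i' : ℤ} (h : |i - i'| ≤ 1) :
    |rcClamp M i - rcClamp M i'| ≤ 1 := by
  unfold rcClamp; rw [abs_le] at *; omega

theorem rcClamp_of_mem {M i : ℤ} (h : i ∈ Icc (0 : ℤ) M) : rcClamp M i = i := by
  simp only [rcClamp, mem_Icc] at *; omega

theorem rc_div_mem {k M s : ℤ} (hk : 1 ≤ k) (hs : s ∈ Icc (0 : ℤ) ((2 * k + 1) * M + 2 * k)) :
    s / (2 * k + 1) ∈ Icc (0 : ℤ) M := by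
  obtain ⟨h0, h1⟩ := hs
  refine ⟨Int.ediv_nonneg h0 (by omega), ?_⟩
  have : s / (2 * k + 1) < M + 1 := by
    rw [Int.ediv_lt_iff_lt_mul (by omega)]; nlinarith
  omega

theorem rc_cover {n : ℕ} {k N j : ℤ} (hk : 1 ≤ k) (hN : 1 ≤ N) (α : ℤ → Fin n → ℤ)
    (hj : j ∈ Icc (0 : ℤ) ((2 * k + 1) * N + 2 * k)) (l : Fin n) :
    cover k N α j l = (2 * k + 1) * α (rcClamp N ((j - k) / (2 * k + 1))) l + k +
      ((j - k) % (2 * k + 1)) * (α (rcClamp N ((j - k) / (2 * k + 1) + 1)) l -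
        α (rcClamp N ((j - k) / (2 * k + 1))) l) := by
  obtain ⟨h0, h1⟩ := hj
  unfold cover
  split_ifs with c1 c2
  · have e : (j - k) / (2 * k + 1) = -1 := by
      rw [Int.ediv_eq_iff_of_pos (by omega)]; constructor <;> linarith
    have e1 : rcClamp N (-1) = 0 := by unfold rcClamp; omega
    have e2 : rcClamp N (-1 + 1) = 0 := by unfold rcClamp; omega
    rw [e, e1, e2]; simp [barPt]
  · have e : (j - k) / (2 * k + 1) = N := by
      rw [Int.ediv_eq_iff_of_pos (by omega)]; constructor <;> nlinarith
    have e1 : rcClamp N N = N := by unfold rcClamp; omega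
    have e2 : rcClamp N (N + 1) = N := by unfold rcClamp; omega
    rw [e, e1, e2]; simp [barPt]
  · rw [Int.fdiv_eq_ediv_of_nonneg _ (by omega)]
    have a1 : 0 ≤ (j - k) / (2 * k + 1) := Int.ediv_nonneg (by omega) (by omega)
    have a2 : (j - k) / (2 * k + 1) < N := by
      rw [Int.ediv_lt_iff_lt_mul (by omega)]; nlinarith
    have e1 : rcClamp N ((j - k) / (2 * k + 1)) = (j - k) / (2 * k + 1) := by
      unfold rcClamp; omega
    have e2 : rcClamp N ((j - k) / (2 * k + 1) + 1) = (j - k) / (2 * k + 1) + 1 := by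
      unfold rcClamp; omega
    rw [e1, e2]; simp [barPt]

theorem rc_end_low {k N : ℤ} (hk : 1 ≤ k) (hN : 1 ≤ N) :
    rcClamp N ((0 - k) / (2 * k + 1)) = 0 ∧ rcClamp N ((0 - k) / (2 * k + 1) + 1) = 0 := by
  have e : (0 - k) / (2 * k + 1) = -1 := by
    rw [Int.ediv_eq_iff_of_pos (by omega)]; constructor <;> linarith
  rw [e]; unfold rcClamp; omega

theorem rc_end_high {k N : ℤ} (hk : 1 ≤ k) (hN : 1 ≤ N) :
    rcClamp N (((2 * k + 1) * N + 2 * k - k) / (2 * k + 1)) = N ∧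
    rcClamp N (((2 * k + 1) * N + 2 * k - k) / (2 * k + 1) + 1) = N := by
  have e : ((2 * k + 1) * N + 2 * k - k) / (2 * k + 1) = N := by
    rw [Int.ediv_eq_iff_of_pos (by omega)]; constructor <;> nlinarith
  rw [e]; unfold rcClamp; omega

theorem rc_mod {k : ℤ} (hk : 1 ≤ k) (x : ℤ) :
    0 ≤ x % (2 * k + 1) ∧ x % (2 * k + 1) ≤ 2 * k + 1 :=
  ⟨Int.emod_nonneg _ (by omega), (Int.emod_lt_of_pos _ (by omega)).le⟩

/-- a continuous map `H : I_M × I_N → Y` admits a continuous cover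
`Ĥ : S(I_M,2k+1) × S(I_N,2k+1) → S(Y,2k+1)` with `ρ_{2k+1} ∘ Ĥ = H ∘ (ρ_{2k+1} × ρ_{2k+1})`,
whose restrictions to the four edges of the rectangle are the standard covers of the
corresponding edge paths of `H`. -/
theorem rectangle_cover_exists {n : ℕ} (Y : Set (Fin n → ℤ)) (hY : Y.Finite)
    (M N k : ℤ) (hM : 1 ≤ M) (hN : 1 ≤ N) (hk : 1 ≤ k)
    (H : ℤ → ℤ → Fin n → ℤ)
    (hmaps : ∀ s ∈ Icc (0 : ℤ) M, ∀ t ∈ Icc (0 : ℤ) N, H s t ∈ Y)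
    (hcont : ∀ s ∈ Icc (0 : ℤ) M, ∀ t ∈ Icc (0 : ℤ) N,
      ∀ s' ∈ Icc (0 : ℤ) M, ∀ t' ∈ Icc (0 : ℤ) N,
      |s - s'| ≤ 1 → |t - t'| ≤ 1 → adj (H s t) (H s' t')) :
    ∃ Hhat : ℤ → ℤ → Fin n → ℤ,
      -- values in S(Y, 2k+1)
      (∀ s ∈ Icc (0 : ℤ) ((2 * k + 1) * M + 2 * k), ∀ t ∈ Icc (0 : ℤ) ((2 * k + 1) * N + 2 * k),
        Hhat s t ∈ Subdiv Y (2 * k + 1)) ∧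
      -- continuity
      (∀ s ∈ Icc (0 : ℤ) ((2 * k + 1) * M + 2 * k), ∀ t ∈ Icc (0 : ℤ) ((2 * k + 1) * N + 2 * k),
        ∀ s' ∈ Icc (0 : ℤ) ((2 * k + 1) * M + 2 * k), ∀ t' ∈ Icc (0 : ℤ) ((2 * k + 1) * N + 2 * k),
        |s - s'| ≤ 1 → |t - t'| ≤ 1 → adj (Hhat s t) (Hhat s' t')) ∧
      -- covering: ρ_{2k+1} ∘ Ĥ = H ∘ (ρ_{2k+1} × ρ_{2k+1})
      (∀ s ∈ Icc (0 : ℤ) ((2 * k + 1) * M + 2 * k), ∀ t ∈ Icc (0 : ℤ) ((2 * k + 1) * N + 2 * k),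
        rho (2 * k + 1) (Hhat s t) = H (s.fdiv (2 * k + 1)) (t.fdiv (2 * k + 1))) ∧
      -- bottom and top edges are standard covers of the horizontal edge paths
      (∀ s ∈ Icc (0 : ℤ) ((2 * k + 1) * M + 2 * k),
        Hhat s 0 = cover k M (fun i => H i 0) s) ∧
      (∀ s ∈ Icc (0 : ℤ) ((2 * k + 1) * M + 2 * k),
        Hhat s ((2 * k + 1) * N + 2 * k) = cover k M (fun i => H i N) s) ∧
      -- left and right edges are standard covers of the vertical edge paths
      (∀ t ∈ Icc (0 : ℤ) ((2 * k + 1) * N + 2 * k),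
        Hhat 0 t = cover k N (fun j => H 0 j) t) ∧
      (∀ t ∈ Icc (0 : ℤ) ((2 * k + 1) * N + 2 * k),
        Hhat ((2 * k + 1) * M + 2 * k) t = cover k N (fun j => H M j) t) := by
  have hc : ∀ l, rcCont (fun i j => H (rcClamp M i) (rcClamp N j) l) := by
    intro l i j i' j' hi hj
    exact hcont _ (rcClamp_mem hM i) _ (rcClamp_mem hN j) _ (rcClamp_mem hM i') _
      (rcClamp_mem hN j') (rcClamp_lip hi) (rcClamp_lip hj) l
  have hrho : ∀ s ∈ Icc (0 : ℤ) ((2 * k + 1) * M + 2 * k),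
      ∀ t ∈ Icc (0 : ℤ) ((2 * k + 1) * N + 2 * k),
      rho (2 * k + 1) (fun l => rcHat k (fun i j => H (rcClamp M i) (rcClamp N j) l) s t) =
        H (s.fdiv (2 * k + 1)) (t.fdiv (2 * k + 1)) := by
    intro s hs t ht
    funext l
    simp only [rho]
    rw [rcHat_floor hk (hc l), Int.fdiv_eq_ediv_of_nonneg _ (by omega),
      Int.fdiv_eq_ediv_of_nonneg _ (by omega), rcClamp_of_mem (rc_div_mem hk hs),
      rcClamp_of_mem (rc_div_mem hk ht)]
  have h00 : (0 : ℤ) ∈ Icc (0 : ℤ) M := ⟨le_rfl, by omega⟩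
  have h0N : (0 : ℤ) ∈ Icc (0 : ℤ) N := ⟨le_rfl, by omega⟩
  have hMM : M ∈ Icc (0 : ℤ) M := ⟨by omega, le_rfl⟩
  have hNN : N ∈ Icc (0 : ℤ) N := ⟨by omega, le_rfl⟩
  have o : ∀ x : ℤ, |x - (x + 1)| ≤ 1 := by intro x; simp
  refine ⟨fun s t l => rcHat k (fun i j => H (rcClamp M i) (rcClamp N j) l) s t,
    ?_, ?_, hrho, ?_, ?_, ?_, ?_⟩
  · intro s hs t ht
    have := hrho s hs t ht
    simp only [Subdiv, mem_ofPred_eq]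
    unfold rho at this
    rw [this, Int.fdiv_eq_ediv_of_nonneg _ (by omega), Int.fdiv_eq_ediv_of_nonneg _ (by omega)]
    exact hmaps _ (rc_div_mem hk hs) _ (rc_div_mem hk ht)
  · intro s _ t _ s' _ t' _ h1 h2 l
    exact rcHat_lip hk (hc l) h1 h2
  · intro s hs
    funext l
    rw [rc_cover hk hM _ hs l]
    simp only [rcHat]
    rw [(rc_end_low hk hN).1, (rc_end_low hk hN).2]
    exact rcCell_const_v (hcont _ (rcClamp_mem hM _) _ h0N _ (rcClamp_mem hM _) _ h0N
      (rcClamp_lip (o _)) (by simp) l) (rc_mod hk _) (rc_mod hk _)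
  · intro s hs
    funext l
    rw [rc_cover hk hM _ hs l]
    simp only [rcHat]
    rw [(rc_end_high hk hN).1, (rc_end_high hk hN).2]
    exact rcCell_const_v (hcont _ (rcClamp_mem hM _) _ hNN _ (rcClamp_mem hM _) _ hNN
      (rcClamp_lip (o _)) (by simp) l) (rc_mod hk _) (rc_mod hk _)
  · intro t ht
    funext l
    rw [rc_cover hk hN _ ht l]
    simp only [rcHat]
    rw [(rc_end_low hk hM).1, (rc_end_low hk hM).2]
    exact rcCell_const_u (hcont _ h00 _ (rcClamp_mem hN _) _ h00 _ (rcClamp_mem hN _)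
      (by simp) (rcClamp_lip (o _)) l) (rc_mod hk _) (rc_mod hk _)
  · intro t ht
    funext l
    rw [rc_cover hk hN _ ht l]
    simp only [rcHat]
    rw [(rc_end_high hk hM).1, (rc_end_high hk hM).2]
    exact rcCell_const_u (hcont _ hMM _ (rcClamp_mem hN _) _ hMM _ (rcClamp_mem hN _)
      (by simp) (rcClamp_lip (o _)) l) (rc_mod hk _) (rc_mod hk _)
end

section
/- Let k ≥ 1 and n ≥ 1, and write 0̄ = k, 1̄ = 3k+1 ∈ ℤ. Let ∂([0̄,1̄]²) = {0̄,1̄} × [0̄,1̄] ∪ [0̄,1̄] × {0̄,1̄} ⊆ ℤ² be the boundary of the square [0̄,1̄]². Suppose F : ∂([0̄,1̄]²) → [0̄,1̄]ⁿ ⊆ ℤⁿ satisfies: (1) for each corner v = (v₁,v₂) ∈ {0,1}², every coordinate of F(v̄₁,v̄₂) lies in {0̄, 1̄} — define f : {0,1}² → {0,1}ⁿ by f(v) = ρ_{2k+1}(F(v̄₁,v̄₂)); and (2) for each pair of horizontally or vertically adjacent corners v, v' of {0,1}², F((v̄₁,v̄₂) + t·(v' − v)) = F(v̄₁,v̄₂)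 + t·(f(v') − f(v)) for all t = 0,…,2k+1. Then F extends to a continuous map F : [0̄,1̄]² → [0̄,1̄]ⁿ satisfying ρ_{2k+1} ∘ F = f ∘ ρ_{2k+1} on [0̄,1̄]²; in particular, F maps each quadrant [0̄,1̄]² ∩ S(v, 2k+1) (v ∈ {0,1}²) into the orthant [0̄,1̄]ⁿ ∩ S(f(v), 2k+1). -/
open Set

/-- The boundary `∂([0̄,1̄]²) = {0̄,1̄} × [0̄,1̄] ∪ [0̄,1̄] × {0̄,1̄}` as a predicate
on pairs `(p,q)`. -/
def onBoundary (k p q : ℤ) : Prop :=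
  ((p = k ∨ p = 3 * k + 1) ∧ q ∈ Icc k (3 * k + 1)) ∨
  (p ∈ Icc k (3 * k + 1) ∧ (q = k ∨ q = 3 * k + 1))


lemma fdiv_val (k x : ℤ) (hk : 1 ≤ k) (h1 : k ≤ x) (h2 : x ≤ 3 * k + 1) :
    x.fdiv (2 * k + 1) = if x ≤ 2 * k then 0 else 1 := by
  rw [Int.fdiv_eq_ediv_of_nonneg _ (by omega)]
  split_ifs with h
  · exact Int.ediv_eq_zero_of_lt (by omega) (by omega)
  · rw [Int.ediv_eq_iff_of_pos (by omega)]
    constructor <;> linarith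

/-- Values along an edge between corner values `a`, `b`. -/
def edgeVal (k a b t : ℤ) : ℤ := if a = b then a else if a = k then t else 4 * k + 1 - t

/-- The required properties of one coordinate function. -/
structure Good (k a b c d : ℤ) (g : ℤ → ℤ → ℤ) : Prop where
  bot : ∀ t, k ≤ t → t ≤ 3 * k + 1 → g t k = edgeVal k a b t
  top : ∀ t, k ≤ t → t ≤ 3 * k + 1 → g t (3 * k + 1) = edgeVal k c d t
  left : ∀ t, k ≤ t → t ≤ 3 * k + 1 → g k t = edgeVal k a c t
  right : ∀ t, k ≤ t → t ≤ 3 * k + 1 → g (3 * k + 1) t = edgeVal k b d t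
  range : ∀ p q, k ≤ p → p ≤ 3 * k + 1 → k ≤ q → q ≤ 3 * k + 1 → k ≤ g p q ∧ g p q ≤ 3 * k + 1
  lip : ∀ p q p' q', |p - p'| ≤ 1 → |q - q'| ≤ 1 → |g p q - g p' q'| ≤ 1
  qa : ∀ p q, k ≤ p → p ≤ 2 * k → k ≤ q → q ≤ 2 * k → (g p q ≤ 2 * k ↔ a ≤ 2 * k)
  qb : ∀ p q, 2 * k < p → p ≤ 3 * k + 1 → k ≤ q → q ≤ 2 * k → (g p q ≤ 2 * k ↔ b ≤ 2 * k)
  qc : ∀ p q, k ≤ p → p ≤ 2 * k → 2 * k < q → q ≤ 3 * k + 1 → (g p q ≤ 2 * k ↔ c ≤ 2 * k)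
  qd : ∀ p q, 2 * k < p → p ≤ 3 * k + 1 → 2 * k < q → q ≤ 3 * k + 1 → (g p q ≤ 2 * k ↔ d ≤ 2 * k)

lemma exists_good (k a b c d : ℤ) (hk : 1 ≤ k) (ha : a = k ∨ a = 3 * k + 1)
    (hb : b = k ∨ b = 3 * k + 1) (hc : c = k ∨ c = 3 * k + 1) (hd : d = k ∨ d = 3 * k + 1) :
    ∃ g, Good k a b c d g := by
  rcases ha with ha | ha <;> rcases hb with hb | hb <;> rcases hc with hc | hc <;>
    rcases hd with hd | hd
  · exact ⟨fun p q => k, by constructor <;> intros <;> (try simp only [abs_le, edgeVal] at *) <;> (try split_ifs) <;> omega⟩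
  · exact ⟨fun p q => min p q, by constructor <;> intros <;> (try simp only [abs_le, edgeVal] at *) <;> (try split_ifs) <;> omega⟩
  · exact ⟨fun p q => min (4 * k + 1 - p) q, by constructor <;> intros <;> (try simp only [abs_le, edgeVal] at *) <;> (try split_ifs) <;> omega⟩
  · exact ⟨fun p q => q, by constructor <;> intros <;> (try simp only [abs_le, edgeVal] at *) <;> (try split_ifs) <;> omega⟩
  · exact ⟨fun p q => min p (4 * k + 1 - q), by constructor <;> intros <;> (try simp only [abs_le, edgeVal] at *) <;> (try split_ifs) <;> omega⟩
  · exact ⟨fun p q => p, by constructor <;> intros <;> (try simp only [abs_le, edgeVal] at *) <;> (try split_ifs) <;> omega⟩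
  · exact ⟨fun p q => max (min p (4 * k + 1 - q)) (min (4 * k + 1 - p) q), by constructor <;> intros <;> (try simp only [abs_le, edgeVal] at *) <;> (try split_ifs) <;> omega⟩
  · exact ⟨fun p q => max p q, by constructor <;> intros <;> (try simp only [abs_le, edgeVal] at *) <;> (try split_ifs) <;> omega⟩
  · exact ⟨fun p q => min (4 * k + 1 - p) (4 * k + 1 - q), by constructor <;> intros <;> (try simp only [abs_le, edgeVal] at *) <;> (try split_ifs) <;> omega⟩
  · exact ⟨fun p q => max (min p q) (min (4 * k + 1 - p) (4 * k + 1 - q)), by constructor <;> intros <;> (try simp only [abs_le, edgeVal] at *) <;> (try split_ifs) <;> omega⟩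
  · exact ⟨fun p q => (4 * k + 1 - p), by constructor <;> intros <;> (try simp only [abs_le, edgeVal] at *) <;> (try split_ifs) <;> omega⟩
  · exact ⟨fun p q => max (4 * k + 1 - p) q, by constructor <;> intros <;> (try simp only [abs_le, edgeVal] at *) <;> (try split_ifs) <;> omega⟩
  · exact ⟨fun p q => (4 * k + 1 - q), by constructor <;> intros <;> (try simp only [abs_le, edgeVal] at *) <;> (try split_ifs) <;> omega⟩
  · exact ⟨fun p q => max p (4 * k + 1 - q), by constructor <;> intros <;> (try simp only [abs_le, edgeVal] at *) <;> (try split_ifs) <;> omega⟩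
  · exact ⟨fun p q => max (4 * k + 1 - p) (4 * k + 1 - q), by constructor <;> intros <;> (try simp only [abs_le, edgeVal] at *) <;> (try split_ifs) <;> omega⟩
  · exact ⟨fun p q => 3 * k + 1, by constructor <;> intros <;> (try simp only [abs_le, edgeVal] at *) <;> (try split_ifs) <;> omega⟩

/-- a map `F` on the boundary of the square `[0̄,1̄]²` into the cube
`[0̄,1̄]ⁿ` which (1) sends corners to corners and (2) interpolates linearly along the
edges (toward the values `f(v) = ρ_{2k+1}(F(v̄₁,v̄₂))`) extends to a continuous map
`G : [0̄,1̄]² → [0̄,1̄]ⁿ` with `ρ_{2k+1} ∘ G = f ∘ ρ_{2k+1}`; in particular each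
quadrant of the square is mapped into the orthant `S(f(v),2k+1)` of the cube. -/
theorem square_boundary_extension {n : ℕ} (hn : 1 ≤ n) (k : ℤ) (hk : 1 ≤ k)
    (F : ℤ → ℤ → Fin n → ℤ)
    (hFcube : ∀ p q : ℤ, onBoundary k p q → ∀ i, F p q i ∈ Icc k (3 * k + 1))
    (hcorner : ∀ v₁ ∈ ({0, 1} : Set ℤ), ∀ v₂ ∈ ({0, 1} : Set ℤ), ∀ i,
      F (bar k v₁) (bar k v₂) i = k ∨ F (bar k v₁) (bar k v₂) i = 3 * k + 1)
    (hedgeH : ∀ v₁ ∈ ({0, 1} : Set ℤ), ∀ v₂ ∈ ({0, 1} : Set ℤ),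
      ∀ t ∈ Icc (0 : ℤ) (2 * k + 1),
      F (bar k v₁ + t * ((1 - v₁) - v₁)) (bar k v₂) = fun i =>
        F (bar k v₁) (bar k v₂) i +
          t * ((F (bar k (1 - v₁)) (bar k v₂) i).fdiv (2 * k + 1)
                - (F (bar k v₁) (bar k v₂) i).fdiv (2 * k + 1)))
    (hedgeV : ∀ v₁ ∈ ({0, 1} : Set ℤ), ∀ v₂ ∈ ({0, 1} : Set ℤ),
      ∀ t ∈ Icc (0 : ℤ) (2 * k + 1),
      F (bar k v₁) (bar k v₂ + t * ((1 - v₂) - v₂)) = fun i =>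
        F (bar k v₁) (bar k v₂) i +
          t * ((F (bar k v₁) (bar k (1 - v₂)) i).fdiv (2 * k + 1)
                - (F (bar k v₁) (bar k v₂) i).fdiv (2 * k + 1))) :
    ∃ G : ℤ → ℤ → Fin n → ℤ,
      -- G extends F
      (∀ p q : ℤ, onBoundary k p q → G p q = F p q) ∧
      -- G maps the square into the cube [0̄,1̄]ⁿ
      (∀ p ∈ Icc k (3 * k + 1), ∀ q ∈ Icc k (3 * k + 1), ∀ i, G p q i ∈ Icc k (3 * k + 1)) ∧
      -- G is continuous
      (∀ p ∈ Icc k (3 * k + 1), ∀ q ∈ Icc k (3 * k + 1),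
        ∀ p' ∈ Icc k (3 * k + 1), ∀ q' ∈ Icc k (3 * k + 1),
        |p - p'| ≤ 1 → |q - q'| ≤ 1 → adj (G p q) (G p' q')) ∧
      -- ρ_{2k+1} ∘ G = f ∘ ρ_{2k+1}: each quadrant lands in the corresponding orthant
      (∀ p ∈ Icc k (3 * k + 1), ∀ q ∈ Icc k (3 * k + 1),
        rho (2 * k + 1) (G p q) =
          rho (2 * k + 1) (F (bar k (p.fdiv (2 * k + 1))) (bar k (q.fdiv (2 * k + 1))))) := by
  have z0 : (0 : ℤ) ∈ ({0, 1} : Set ℤ) := by simp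
  have z1 : (1 : ℤ) ∈ ({0, 1} : Set ℤ) := by simp
  have b0 : bar k 0 = k := by simp [bar]
  have b1 : bar k 1 = 3 * k + 1 := by simp only [bar]; ring
  have c00 := hcorner 0 z0 0 z0
  have c10 := hcorner 1 z1 0 z0
  have c01 := hcorner 0 z0 1 z1
  have c11 := hcorner 1 z1 1 z1
  simp only [b0, b1] at c00 c10 c01 c11
  have e0 := hedgeH 0 z0 0 z0
  have e1 := hedgeH 0 z0 1 z1
  have e2 := hedgeV 0 z0 0 z0
  have e3 := hedgeV 1 z1 0 z0
  simp only [sub_zero, b0, b1, mul_one] at e0 e1 e2 e3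
  have key : ∀ a b t : ℤ, (a = k ∨ a = 3 * k + 1) → (b = k ∨ b = 3 * k + 1) →
      a + (t - k) * (b.fdiv (2 * k + 1) - a.fdiv (2 * k + 1)) = edgeVal k a b t := by
    intro a b t ha hb
    rw [fdiv_val k a hk (by omega) (by omega), fdiv_val k b hk (by omega) (by omega)]
    unfold edgeVal
    rcases ha with ha | ha <;> rcases hb with hb | hb <;> rw [ha, hb] <;> split_ifs <;> first | omega | (ring_nf; done)
  have fb : ∀ t, k ≤ t → t ≤ 3 * k + 1 → ∀ i, F t k i = edgeVal k (F k k i) (F (3 * k + 1) k i) t := by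
    intro t h1 h2 i
    have h := congrFun (e0 (t - k) ⟨by omega, by omega⟩) i
    rw [add_sub_cancel] at h
    rw [h, key _ _ _ (c00 i) (c10 i)]
  have ft : ∀ t, k ≤ t → t ≤ 3 * k + 1 → ∀ i,
      F t (3 * k + 1) i = edgeVal k (F k (3 * k + 1) i) (F (3 * k + 1) (3 * k + 1) i) t := by
    intro t h1 h2 i
    have h := congrFun (e1 (t - k) ⟨by omega, by omega⟩) i
    rw [add_sub_cancel] at h
    rw [h, key _ _ _ (c01 i) (c11 i)]
  have fl : ∀ t, k ≤ t → t ≤ 3 * k + 1 → ∀ i, F k t i = edgeVal k (F k k i) (F k (3 * k + 1) i) t := by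
    intro t h1 h2 i
    have h := congrFun (e2 (t - k) ⟨by omega, by omega⟩) i
    rw [add_sub_cancel] at h
    rw [h, key _ _ _ (c00 i) (c01 i)]
  have fr : ∀ t, k ≤ t → t ≤ 3 * k + 1 → ∀ i,
      F (3 * k + 1) t i = edgeVal k (F (3 * k + 1) k i) (F (3 * k + 1) (3 * k + 1) i) t := by
    intro t h1 h2 i
    have h := congrFun (e3 (t - k) ⟨by omega, by omega⟩) i
    rw [add_sub_cancel] at h
    rw [h, key _ _ _ (c10 i) (c11 i)]
  choose g hg using fun i => exists_good k _ _ _ _ hk (c00 i) (c10 i) (c01 i) (c11 i)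
  refine ⟨fun p q i => g i p q, ?_, ?_, ?_, ?_⟩
  · rintro p q (⟨rfl | rfl, h1, h2⟩ | ⟨⟨h1, h2⟩, rfl | rfl⟩) <;> funext i
    · exact ((hg i).left _ h1 h2).trans (fl _ h1 h2 i).symm
    · exact ((hg i).right _ h1 h2).trans (fr _ h1 h2 i).symm
    · exact ((hg i).bot _ h1 h2).trans (fb _ h1 h2 i).symm
    · exact ((hg i).top _ h1 h2).trans (ft _ h1 h2 i).symm
  · intro p hp q hq i
    exact (hg i).range p q hp.1 hp.2 hq.1 hq.2
  · intro p _ q _ p' _ q' _ h1 h2 i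
    exact (hg i).lip p q p' q' h1 h2
  · rintro p ⟨hp1, hp2⟩ q ⟨hq1, hq2⟩
    funext i
    have hr := (hg i).range p q hp1 hp2 hq1 hq2
    have hA := c00 i
    have hB := c10 i
    have hC := c01 i
    have hD := c11 i
    simp only [rho]
    rw [fdiv_val k p hk hp1 hp2, fdiv_val k q hk hq1 hq2, fdiv_val k _ hk hr.1 hr.2]
    by_cases h1 : p ≤ 2 * k <;> by_cases h2 : q ≤ 2 * k <;>
      simp only [h1, h2, if_true, if_false, b0, b1]
    · rw [fdiv_val k _ hk (by omega) (by omega)]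
      simp only [(hg i).qa p q hp1 h1 hq1 h2]
    · rw [fdiv_val k _ hk (by omega) (by omega)]
      simp only [(hg i).qc p q hp1 h1 (by omega) hq2]
    · rw [fdiv_val k _ hk (by omega) (by omega)]
      simp only [(hg i).qb p q (by omega) hp2 hq1 h2]
    · rw [fdiv_val k _ hk (by omega) (by omega)]
      simp only [(hg i).qd p q (by omega) hp2 (by omega) hq2]
end

section
/- Let f : X → Y be a continuous map of digital images, where X ⊆ ℤ² and Y ⊆ ℤⁿ, and let k ≥ 1. Then there exists a continuous map f̂ : S(X, 2k+1) → S(Y, 2k+1) covering f, i.e. ρ_{2k+1} ∘ f̂ = f ∘ ρ_{2k+1} : S(X, 2k+1) → Y. -/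
open Set

/-- `c` is a chain of `m` steps in `S(X,K)` ending at `q`. -/
def IsChainTo {d : ℕ} (S : Set (Fin d → ℤ)) (m : ℕ) (c : ℕ → Fin d → ℤ) (q : Fin d → ℤ) : Prop :=
  (∀ i ≤ m, c i ∈ S) ∧ (∀ i < m, adj (c i) (c (i + 1))) ∧ c m = q

/-- Values forced from below at `q`. -/
def lowerVals {d : ℕ} (X : Set (Fin d → ℤ)) (K : ℤ) (g : (Fin d → ℤ) → ℤ) (q : Fin d → ℤ) : Set ℤ :=
  {v | ∃ (m : ℕ) (c : ℕ → Fin d → ℤ), IsChainTo (Subdiv X K) m c q ∧ v = K * g (rho K (c 0)) - m}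

lemma fdiv_le_add_one {K a b : ℤ} (hK : 0 < K) (h : a ≤ b + K) : a.fdiv K ≤ b.fdiv K + 1 := by
  rw [Int.fdiv_eq_ediv_of_nonneg _ hK.le, Int.fdiv_eq_ediv_of_nonneg _ hK.le]
  have h1 := Int.ediv_le_ediv hK h
  have h2 : (b + K) / K = b / K + 1 := by
    have := Int.add_mul_ediv_right b 1 hK.ne'
    simpa using this
  omega

lemma fdiv_eq_of_bounds {K v g : ℤ} (hK : 0 < K) (h1 : K * g ≤ v) (h2 : v ≤ K * g + (K - 1)) :
    v.fdiv K = g := by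
  rw [Int.fdiv_eq_ediv_of_nonneg _ hK.le]
  apply le_antisymm
  · have : v / K < g + 1 := (Int.ediv_lt_iff_lt_mul hK).2 (by linarith)
    omega
  · exact (Int.le_ediv_iff_mul_le hK).2 (by linarith)

lemma chain_dist {d : ℕ} {c : ℕ → Fin d → ℤ} (i m : ℕ)
    (h : ∀ j, i ≤ j → j < i + m → adj (c j) (c (j + 1))) (t : Fin d) :
    |c i t - c (i + m) t| ≤ m := by
  induction m with
  | zero => simp
  | succ m ih =>
    have h1 := ih (fun j hj hj' => h j hj (by omega))
    have h2 := h (i + m) (by omega) (by omega) t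
    rw [abs_le] at *
    rw [← add_assoc]
    push_cast
    constructor <;> linarith [h1.1, h1.2, h2.1, h2.2]

lemma chain_bound {d : ℕ} {X : Set (Fin d → ℤ)} {K : ℕ} (hK : 0 < K) {g : (Fin d → ℤ) → ℤ}
    (hg : ∀ x ∈ X, ∀ x' ∈ X, adj x x' → |g x - g x'| ≤ 1) {c : ℕ → Fin d → ℤ} (M : ℕ)
    (hc : ∀ i ≤ M, c i ∈ Subdiv X (K : ℤ)) (ha : ∀ i < M, adj (c i) (c (i + 1))) (j : ℕ) :
    ∀ i m : ℕ, i + m ≤ M → m ≤ j * K →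
      g (rho K (c i)) ≤ g (rho K (c (i + m))) + j := by
  induction j with
  | zero =>
    intro i m _ h
    have : m = 0 := by simpa using h
    subst this
    simp
  | succ j ih =>
    intro i m hM h
    have hs : i + min m K + (m - min m K) = i + m := by omega
    have h1 := ih (i + min m K) (m - min m K) (by omega) (by
      rw [add_mul, one_mul] at h
      omega)
    rw [hs] at h1
    have hadj : adj (rho (K : ℤ) (c i)) (rho (K : ℤ) (c (i + min m K))) := by
      intro t
      have h2 := chain_dist (c := c) i (min m K) (fun l _ hl => ha l (by omega)) t
      have h3 : ((min m K : ℕ) : ℤ) ≤ K := by exact_mod_cast min_le_right m K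
      have hK' : (0 : ℤ) < K := by exact_mod_cast hK
      rw [abs_le] at h2
      have h4 := fdiv_le_add_one (a := c i t) (b := c (i + min m K) t) hK' (by linarith [h2.2])
      have h5 := fdiv_le_add_one (b := c i t) (a := c (i + min m K) t) hK' (by linarith [h2.1])
      unfold rho
      rw [abs_le]
      constructor <;> linarith
    have h6 := hg (rho K (c i)) (hc i (by omega)) (rho K (c (i + min m K))) (hc (i + min m K) (by omega)) hadj
    rw [abs_le] at h6
    push_cast
    linarith [h6.2]

lemma lowerVals_le {d : ℕ} {X : Set (Fin d → ℤ)} {K : ℕ} (hK : 0 < K) {g : (Fin d → ℤ) → ℤ}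
    (hg : ∀ x ∈ X, ∀ x' ∈ X, adj x x' → |g x - g x'| ≤ 1) {q : Fin d → ℤ} {v : ℤ}
    (hv : v ∈ lowerVals X K g q) : v ≤ K * g (rho K q) + ((K : ℤ) - 1) := by
  obtain ⟨m, c, ⟨hc, ha, rfl⟩, rfl⟩ := hv
  have hj : m ≤ (m + K - 1) / K * K := by
    have h1 := Nat.div_add_mod (m + K - 1) K
    have h2 := Nat.mod_lt (m + K - 1) hK
    rw [mul_comm] at h1
    omega
  have hj2 : (m + K - 1) / K * K ≤ m + K - 1 := Nat.div_mul_le_self _ _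
  generalize (m + K - 1) / K = j at hj hj2
  have h := chain_bound hK hg m hc ha j 0 m (by omega) hj
  rw [zero_add] at h
  have hj3 : (j : ℤ) * K ≤ m + K - 1 := by
    have : j * K + 1 ≤ m + K := by omega
    have : (j : ℤ) * K + 1 ≤ m + K := by exact_mod_cast this
    linarith
  have hK' : (0 : ℤ) ≤ K := by positivity
  have := mul_le_mul_of_nonneg_left h hK'
  linarith

lemma mem_lowerVals_self {d : ℕ} {X : Set (Fin d → ℤ)} {K : ℤ} {g : (Fin d → ℤ) → ℤ}
    {q : Fin d → ℤ} (hq : q ∈ Subdiv X K) : K * g (rho K q) ∈ lowerVals X K g q :=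
  ⟨0, fun _ => q, ⟨fun _ _ => hq, fun i hi => absurd hi (by omega), rfl⟩, by simp⟩

lemma lowerVals_step {d : ℕ} {X : Set (Fin d → ℤ)} {K : ℤ} {g : (Fin d → ℤ) → ℤ}
    {p q : Fin d → ℤ} (hq : q ∈ Subdiv X K) (hpq : adj p q) {v : ℤ}
    (hv : v ∈ lowerVals X K g p) : v - 1 ∈ lowerVals X K g q := by
  obtain ⟨m, c, ⟨hc, ha, rfl⟩, rfl⟩ := hv
  refine ⟨m + 1, fun i => if i ≤ m then c i else q, ⟨?_, ?_, ?_⟩, ?_⟩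
  · intro i _
    by_cases h : i ≤ m
    · simpa [h] using hc i h
    · simpa [h] using hq
  · intro i hi
    by_cases h : i + 1 ≤ m
    · have h' : i ≤ m := by omega
      simpa [h, h'] using ha i h
    · have h' : i = m := by omega
      subst h'
      simpa using hpq
  · simp
  · simp only [Nat.zero_le, if_true]
    push_cast
    ring

lemma sSup_step {d : ℕ} {X : Set (Fin d → ℤ)} {K : ℕ} (hK : 0 < K) {g : (Fin d → ℤ) → ℤ}
    (hg : ∀ x ∈ X, ∀ x' ∈ X, adj x x' → |g x - g x'| ≤ 1) {p q : Fin d → ℤ}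
    (hp : p ∈ Subdiv X (K : ℤ)) (hq : q ∈ Subdiv X (K : ℤ)) (hpq : adj p q) :
    sSup (lowerVals X K g p) ≤ sSup (lowerVals X K g q) + 1 := by
  apply csSup_le ⟨_, mem_lowerVals_self hp⟩
  intro v hv
  have := le_csSup ⟨_, fun _ hw => lowerVals_le hK hg hw⟩ (lowerVals_step hq hpq hv)
  linarith

/-- any continuous map `f : X → Y` of digital images with `X ⊆ ℤ²`
admits a continuous cover `f̂ : S(X,2k+1) → S(Y,2k+1)` with
`ρ_{2k+1} ∘ f̂ = f ∘ ρ_{2k+1}`. -/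
theorem twoD_cover_exists {n : ℕ} (X : Set (Fin 2 → ℤ)) (Y : Set (Fin n → ℤ))
    (hX : X.Finite) (hY : Y.Finite) (k : ℤ) (hk : 1 ≤ k)
    (f : (Fin 2 → ℤ) → Fin n → ℤ)
    (hmaps : ∀ x ∈ X, f x ∈ Y)
    (hcont : ∀ x ∈ X, ∀ x' ∈ X, adj x x' → adj (f x) (f x')) :
    ∃ fhat : (Fin 2 → ℤ) → Fin n → ℤ,
      (∀ p ∈ Subdiv X (2 * k + 1), fhat p ∈ Subdiv Y (2 * k + 1)) ∧
      (∀ p ∈ Subdiv X (2 * k + 1), ∀ p' ∈ Subdiv X (2 * k + 1),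
        adj p p' → adj (fhat p) (fhat p')) ∧
      (∀ p ∈ Subdiv X (2 * k + 1), rho (2 * k + 1) (fhat p) = f (rho (2 * k + 1) p)) := by
  lift k to ℕ using by omega
  have hK0 : (2 * (k : ℤ) + 1) = ((2 * k + 1 : ℕ) : ℤ) := by push_cast; rfl
  rw [hK0]
  have hK : 0 < 2 * k + 1 := by omega
  generalize 2 * k + 1 = K at hK
  have hg : ∀ t, ∀ x ∈ X, ∀ x' ∈ X, adj x x' → |f x t - f x' t| ≤ 1 :=
    fun t x hx x' hx' h => hcont x hx x' hx' h t
  have hcov : ∀ p ∈ Subdiv X (K : ℤ),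
      rho (K : ℤ) (fun t => sSup (lowerVals X K (fun x => f x t) p)) = f (rho K p) := by
    intro p hp
    funext t
    apply fdiv_eq_of_bounds (by exact_mod_cast hK)
    · exact le_csSup ⟨_, fun _ hw => lowerVals_le hK (hg t) hw⟩
        (mem_lowerVals_self (g := fun x => f x t) hp)
    · exact csSup_le ⟨_, mem_lowerVals_self hp⟩ (fun _ hw => lowerVals_le hK (hg t) hw)
  refine ⟨fun p t => sSup (lowerVals X K (fun x => f x t) p), ?_, ?_, hcov⟩
  · intro p hp
    have h := hmaps _ hp
    change rho (K : ℤ) _ ∈ Y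
    rw [hcov p hp]
    exact h
  · intro p hp q hq hpq t
    have hqp : adj q p := fun i => by
      rw [abs_sub_comm]
      exact hpq i
    have h1 := sSup_step hK (hg t) hp hq hpq
    have h2 := sSup_step hK (hg t) hq hp hqp
    rw [abs_le]
    constructor <;> linarith
end

section
/- Let k ≥ 1 and n ≥ 1, write 0̄ = k and 1̄ = 3k+1, and let C be the coordinate-centring function with iterates Cˢ. Let V ⊆ {0,1}² be nonempty and f : V → {0,1}ⁿ any function. Then there exists a continuous map F : [0̄,1̄]² ∩ S(V, 2k+1) → [0̄,1̄]ⁿ such that: (i) ρ_{2k+1} ∘ F = f ∘ ρ_{2k+1} on the domain; (ii) for each v = (v₁,v₂) ∈ V and 0 ≤ s ≤ k, F(Cˢ(v̄₁), v̄₂) = \overline{f(v)} + s·(f(1−v₁,v₂) − f(v)) if (1−v₁,v₂) ∈ V, and F(Cˢ(v̄₁), v̄₂) = \overline{f(v)} if (1−v₁,v₂) ∉ V; (iii) for each v = (v₁,v₂) ∈ V and 0 ≤ t ≤ k, F(v̄₁, Cᵗ(v̄₂)) = \overline{f(v)} + t·(f(v₁,1−v₂) − f(v)) if (v₁,1−v₂)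 ∈ V, and F(v̄₁, Cᵗ(v̄₂)) = \overline{f(v)} if (v₁,1−v₂) ∉ V; and (iv) F maps [0̄,1̄]² ∩ S(v, 2k+1) into [0̄,1̄]ⁿ ∩ S(f(v), 2k+1) for each v ∈ V. -/
open Set

/-- The coordinate-centring function `C` on `[k, 3k+1] ∩ ℤ`. -/
def centreFn (k x : ℤ) : ℤ :=
  if x ≤ 2 * k - 1 then x + 1 else if x ≤ 2 * k + 1 then x else x - 1

open Classical in
/-- Depth towards the middle of the cube. -/
noncomputable def qDepth (v h w g : ℤ) (mh mw mg : Prop) (s t : ℤ) : ℤ :=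
  max (max (if mh ∧ h ≠ v then s else 0) (if mw ∧ w ≠ v then t else 0))
    (if mg ∧ g ≠ v then min s t else 0)

/-- The point of the half-interval of `x` at depth `d`. -/
def qVal (k x d : ℤ) : ℤ := if x = 0 then k + d else 3 * k + 1 - d

/-- Depth of the coordinate `p` from the outer end. -/
def qS (k p : ℤ) : ℤ := if p ≤ 2 * k then p - k else 3 * k + 1 - p

/-- The half-interval of the coordinate `p`. -/
def qQ (k p : ℤ) : ℤ := if p ≤ 2 * k then 0 else 1

theorem fdiv_low (k p : ℤ) (hk : 1 ≤ k) (h0 : k ≤ p) (h1 : p ≤ 2 * k) :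
    p.fdiv (2 * k + 1) = 0 := by
  rw [Int.fdiv_eq_ediv_of_nonneg _ (by omega)]
  exact Int.ediv_eq_zero_of_lt (by omega) (by omega)

theorem fdiv_high (k p : ℤ) (hk : 1 ≤ k) (h0 : 2 * k < p) (h1 : p ≤ 3 * k + 1) :
    p.fdiv (2 * k + 1) = 1 := by
  rw [Int.fdiv_eq_ediv_of_nonneg _ (by omega)]
  rw [Int.ediv_eq_iff_of_pos (by omega)]
  constructor <;> omega

theorem fdiv_qQ (k p : ℤ) (hk : 1 ≤ k) (h : p ∈ Icc k (3 * k + 1)) :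
    p.fdiv (2 * k + 1) = qQ k p := by
  obtain ⟨h0, h1⟩ := h
  unfold qQ
  split_ifs with h2
  · exact fdiv_low k p hk h0 h2
  · exact fdiv_high k p hk (by omega) h1

theorem qS_bounds (k p : ℤ) (h : p ∈ Icc k (3 * k + 1)) : 0 ≤ qS k p ∧ qS k p ≤ k := by
  obtain ⟨h0, h1⟩ := h
  unfold qS
  split_ifs <;> omega

theorem step_cases (k p p' : ℤ) (h : |p - p'| ≤ 1) :
    (qQ k p' = qQ k p ∧ |qS k p - qS k p'| ≤ 1) ∨
    (qQ k p' = 1 - qQ k p ∧ qS k p = k ∧ qS k p' = k) := by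
  rw [abs_le] at h
  unfold qQ qS
  simp only [abs_le]
  split_ifs <;> omega

theorem qDepth_bounds (k v h w g : ℤ) (mh mw mg : Prop) (s t : ℤ)
    (hs : 0 ≤ s ∧ s ≤ k) (ht : 0 ≤ t ∧ t ≤ k) :
    0 ≤ qDepth v h w g mh mw mg s t ∧ qDepth v h w g mh mw mg s t ≤ k := by
  unfold qDepth
  split_ifs <;> omega

theorem qVal_mem (k x d : ℤ) (hk : 1 ≤ k) (hx : x = 0 ∨ x = 1) (hd : 0 ≤ d ∧ d ≤ k) :
    qVal k x d ∈ Icc k (3 * k + 1) ∧ (qVal k x d).fdiv (2 * k + 1) = x := by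
  rcases hx with rfl | rfl
  · simp only [qVal, if_true, mem_Icc]
    exact ⟨by omega, fdiv_low k _ hk (by omega) (by omega)⟩
  · simp only [qVal, mem_Icc, one_ne_zero, if_false]
    exact ⟨by omega, fdiv_high k _ hk (by omega) (by omega)⟩

theorem qVal_adj_same (k x d d' : ℤ) (h : |d - d'| ≤ 1) : |qVal k x d - qVal k x d'| ≤ 1 := by
  rw [abs_le] at *
  unfold qVal
  split_ifs <;> omega

theorem qVal_adj_mid (k x y : ℤ) : |qVal k x k - qVal k y k| ≤ 1 := by
  rw [abs_le]
  unfold qVal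
  split_ifs <;> omega

theorem qDepth_lip (v h w g : ℤ) (mh mw mg : Prop) (s t s' t' : ℤ)
    (hs : |s - s'| ≤ 1) (ht : |t - t'| ≤ 1) :
    |qDepth v h w g mh mw mg s t - qDepth v h w g mh mw mg s' t'| ≤ 1 := by
  rw [abs_le] at *
  unfold qDepth
  split_ifs <;> omega

theorem qDepth_symm (v h w g : ℤ) (mh mw mg : Prop) (s t : ℤ) :
    qDepth v h w g mh mw mg s t = qDepth v w h g mw mh mg t s := by
  unfold qDepth
  split_ifs <;> omega

theorem adj_horiz (k v h w g : ℤ) (mv mh mw mg : Prop) (hv : mv) (hh : mh) (t t' : ℤ)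
    (ht : 0 ≤ t ∧ t ≤ k) (ht' : 0 ≤ t' ∧ t' ≤ k) (h1 : |t - t'| ≤ 1) :
    |qVal k v (qDepth v h w g mh mw mg k t) - qVal k h (qDepth h v g w mv mg mw k t')| ≤ 1 := by
  by_cases e : h = v
  · subst e
    apply qVal_adj_same
    rw [abs_le] at *
    unfold qDepth
    split_ifs <;> omega
  · have e1 : qDepth v h w g mh mw mg k t = k := by
      unfold qDepth
      rw [if_pos ⟨hh, e⟩]
      split_ifs <;> omega
    have e2 : qDepth h v g w mv mg mw k t' = k := by
      unfold qDepth
      rw [if_pos ⟨hv, Ne.symm e⟩]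
      split_ifs <;> omega
    rw [e1, e2]
    exact qVal_adj_mid k v h

theorem adj_vert (k v h w g : ℤ) (mv mh mw mg : Prop) (hv : mv) (hw : mw) (t t' : ℤ)
    (ht : 0 ≤ t ∧ t ≤ k) (ht' : 0 ≤ t' ∧ t' ≤ k) (h1 : |t - t'| ≤ 1) :
    |qVal k v (qDepth v h w g mh mw mg t k) - qVal k w (qDepth w g v h mg mv mh t' k)| ≤ 1 := by
  rw [qDepth_symm v, qDepth_symm w]
  exact adj_horiz k v w h g mv mw mh mg hv hw t t' ht ht' h1

theorem qDepth_corner (k v h w g : ℤ) (mh mw mg : Prop) (hk : 1 ≤ k) :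
    qDepth v h w g mh mw mg k k =
      open Classical in if (mh ∧ h ≠ v) ∨ (mw ∧ w ≠ v) ∨ (mg ∧ g ≠ v) then k else 0 := by
  unfold qDepth
  by_cases h1 : mh ∧ h ≠ v <;> by_cases h2 : mw ∧ w ≠ v <;> by_cases h3 : mg ∧ g ≠ v <;>
    simp only [h1, h2, h3, if_true, if_false, or_true, true_or, or_self, and_self, ne_eq,
      not_false_eq_true] <;> omega

theorem adj_diag (k v h w g : ℤ) (mv mh mw mg : Prop) (hk : 1 ≤ k) (hv : mv) (hg : mg) :
    |qVal k v (qDepth v h w g mh mw mg k k) - qVal k g (qDepth g w h v mw mh mv k k)| ≤ 1 := by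
  rw [qDepth_corner _ _ _ _ _ _ _ _ hk, qDepth_corner _ _ _ _ _ _ _ _ hk]
  by_cases e : g = v
  · subst e
    apply qVal_adj_same
    rw [abs_le]
    split_ifs <;> first | omega | tauto
  · rw [if_pos (Or.inr (Or.inr ⟨hg, e⟩)), if_pos (Or.inr (Or.inr ⟨hv, Ne.symm e⟩))]
    exact qVal_adj_mid k v g

theorem centre_iter (k a : ℤ) (hk : 1 ≤ k) (ha : a = 0 ∨ a = 1) (s : ℕ) (hs : (s : ℤ) ≤ k) :
    (centreFn k)^[s] (bar k a) = if a = 0 then k + s else 3 * k + 1 - s := by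
  induction s with
  | zero => rcases ha with rfl | rfl <;> simp [bar] ; ring
  | succ s ih =>
    push_cast at hs ⊢
    rw [Function.iterate_succ_apply', ih (by omega)]
    unfold centreFn
    split_ifs <;> omega

theorem centre_Q (k a : ℤ) (hk : 1 ≤ k) (ha : a = 0 ∨ a = 1) (s : ℕ) (hs : (s : ℤ) ≤ k) :
    qQ k ((centreFn k)^[s] (bar k a)) = a ∧ qS k ((centreFn k)^[s] (bar k a)) = s := by
  rw [centre_iter k a hk ha s hs]
  unfold qQ qS
  rcases ha with rfl | rfl <;> simp <;> omega

theorem qDepth_edge (v h w g : ℤ) (mh mw mg : Prop) (s : ℤ) (hs : 0 ≤ s) :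
    qDepth v h w g mh mw mg s 0 = open Classical in if mh ∧ h ≠ v then s else 0 := by
  unfold qDepth
  split_ifs <;> omega

theorem edge_val (k v h w g : ℤ) (mh mw mg : Prop) (s : ℤ) (hs : 0 ≤ s)
    (hv : v = 0 ∨ v = 1) (hh : mh → h = 0 ∨ h = 1) :
    (mh → qVal k v (qDepth v h w g mh mw mg s 0) = ((2 * k + 1) * v + k) + s * (h - v)) ∧
    (¬ mh → qVal k v (qDepth v h w g mh mw mg s 0) = (2 * k + 1) * v + k) := by
  rw [qDepth_edge _ _ _ _ _ _ _ _ hs]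
  constructor
  · intro m
    rcases hv with rfl | rfl <;> rcases hh m with rfl | rfl <;> simp [m, qVal] <;> ring
  · intro m
    rcases hv with rfl | rfl <;> simp [m, qVal] ; ring

/-- The extension. -/
noncomputable def qF {n : ℕ} (k : ℤ) (V : Set (ℤ × ℤ)) (f : ℤ × ℤ → Fin n → ℤ) (p q : ℤ) :
    Fin n → ℤ := fun i =>
  qVal k (f (qQ k p, qQ k q) i)
    (qDepth (f (qQ k p, qQ k q) i) (f (1 - qQ k p, qQ k q) i) (f (qQ k p, 1 - qQ k q) i)
      (f (1 - qQ k p, 1 - qQ k q) i) ((1 - qQ k p, qQ k q) ∈ V) ((qQ k p, 1 - qQ k q) ∈ V)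
      ((1 - qQ k p, 1 - qQ k q) ∈ V) (qS k p) (qS k q))

/-- for any nonempty `V ⊆ {0,1}²` and any `f : V → {0,1}ⁿ` there is a
continuous map `F : [0̄,1̄]² ∩ S(V,2k+1) → [0̄,1̄]ⁿ` covering `f`, whose values on the
outer edges of each quadrant interpolate toward present neighbours of `V` (and are the
centre `\overline{f(v)}` in the direction of absent neighbours), and which maps the
quadrant of each `v ∈ V` into the orthant `[0̄,1̄]ⁿ ∩ S(f(v),2k+1)`. -/
theorem quadrant_extension_general {n : ℕ} (hn : 1 ≤ n) (k : ℤ) (hk : 1 ≤ k)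
    (V : Set (ℤ × ℤ)) (hVsub : V ⊆ ({0, 1} : Set ℤ) ×ˢ ({0, 1} : Set ℤ))
    (hVne : V.Nonempty)
    (f : ℤ × ℤ → Fin n → ℤ)
    (hf : ∀ v ∈ V, ∀ i, f v i = 0 ∨ f v i = 1) :
    ∃ F : ℤ → ℤ → Fin n → ℤ,
      -- (i) ρ_{2k+1} ∘ F = f ∘ ρ_{2k+1} on [0̄,1̄]² ∩ S(V, 2k+1)
      (∀ p ∈ Icc k (3 * k + 1), ∀ q ∈ Icc k (3 * k + 1),
        (p.fdiv (2 * k + 1), q.fdiv (2 * k + 1)) ∈ V →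
        rho (2 * k + 1) (F p q) = f (p.fdiv (2 * k + 1), q.fdiv (2 * k + 1))) ∧
      -- F is continuous on [0̄,1̄]² ∩ S(V, 2k+1)
      (∀ p ∈ Icc k (3 * k + 1), ∀ q ∈ Icc k (3 * k + 1),
        ∀ p' ∈ Icc k (3 * k + 1), ∀ q' ∈ Icc k (3 * k + 1),
        (p.fdiv (2 * k + 1), q.fdiv (2 * k + 1)) ∈ V →
        (p'.fdiv (2 * k + 1), q'.fdiv (2 * k + 1)) ∈ V →
        |p - p'| ≤ 1 → |q - q'| ≤ 1 → adj (F p q) (F p' q')) ∧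
      -- (ii) horizontal outer edges
      (∀ v ∈ V, ∀ s : ℕ, (s : ℤ) ≤ k →
        ((1 - v.1, v.2) ∈ V →
          F ((centreFn k)^[s] (bar k v.1)) (bar k v.2) = fun i =>
            ((2 * k + 1) * f v i + k) + (s : ℤ) * (f (1 - v.1, v.2) i - f v i)) ∧
        ((1 - v.1, v.2) ∉ V →
          F ((centreFn k)^[s] (bar k v.1)) (bar k v.2) = fun i =>
            (2 * k + 1) * f v i + k)) ∧
      -- (iii) vertical outer edges
      (∀ v ∈ V, ∀ t : ℕ, (t : ℤ) ≤ k →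
        ((v.1, 1 - v.2) ∈ V →
          F (bar k v.1) ((centreFn k)^[t] (bar k v.2)) = fun i =>
            ((2 * k + 1) * f v i + k) + (t : ℤ) * (f (v.1, 1 - v.2) i - f v i)) ∧
        ((v.1, 1 - v.2) ∉ V →
          F (bar k v.1) ((centreFn k)^[t] (bar k v.2)) = fun i =>
            (2 * k + 1) * f v i + k)) ∧
      -- (iv) each quadrant lands in the corresponding orthant of the cube
      (∀ v ∈ V, ∀ p ∈ Icc k (3 * k + 1), ∀ q ∈ Icc k (3 * k + 1),
        (p.fdiv (2 * k + 1), q.fdiv (2 * k + 1)) = v →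
        ∀ i, F p q i ∈ Icc k (3 * k + 1) ∧ (F p q i).fdiv (2 * k + 1) = f v i) := by
  have h4 : ∀ v ∈ V, ∀ p ∈ Icc k (3 * k + 1), ∀ q ∈ Icc k (3 * k + 1),
        (p.fdiv (2 * k + 1), q.fdiv (2 * k + 1)) = v →
        ∀ i, qF k V f p q i ∈ Icc k (3 * k + 1) ∧
          (qF k V f p q i).fdiv (2 * k + 1) = f v i := by
    intro v hv p hp q hq e i
    rw [fdiv_qQ k p hk hp, fdiv_qQ k q hk hq] at e
    subst e
    exact qVal_mem k _ _ hk (hf _ hv i)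
      (qDepth_bounds k _ _ _ _ _ _ _ _ _ (qS_bounds k p hp) (qS_bounds k q hq))
  refine ⟨qF k V f, ?_, ?_, ?_, ?_, h4⟩
  · intro p hp q hq hv
    funext i
    exact (h4 _ hv p hp q hq rfl i).2
  · intro p hp q hq p' hp' q' hq' hv hv' h1 h2 i
    rw [fdiv_qQ k p hk hp, fdiv_qQ k q hk hq] at hv
    rw [fdiv_qQ k p' hk hp', fdiv_qQ k q' hk hq'] at hv'
    have bp := qS_bounds k p hp
    have bq := qS_bounds k q hq
    have bp' := qS_bounds k p' hp'
    have bq' := qS_bounds k q' hq'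
    unfold qF
    rcases step_cases k p p' h1 with ⟨e1, s1⟩ | ⟨e1, s1, s1'⟩ <;>
      rcases step_cases k q q' h2 with ⟨e2, s2⟩ | ⟨e2, s2, s2'⟩ <;>
      rw [e1, e2] at hv' <;> rw [e1, e2]
    · exact qVal_adj_same _ _ _ _ (qDepth_lip _ _ _ _ _ _ _ _ _ _ _ s1 s2)
    · rw [s2, s2']
      simp only [sub_sub_cancel]
      exact adj_vert k _ _ _ _ _ _ _ _ hv hv' _ _ bp bp' s1
    · rw [s1, s1']
      simp only [sub_sub_cancel]
      exact adj_horiz k _ _ _ _ _ _ _ _ hv hv' _ _ bq bq' s2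
    · rw [s1, s1', s2, s2']
      simp only [sub_sub_cancel]
      exact adj_diag k _ _ _ _ _ _ _ _ hk hv hv'
  · rintro ⟨a, b⟩ hv s hs
    obtain ⟨ha, hb⟩ := hVsub hv
    obtain ⟨q1, q2⟩ := centre_Q k a hk ha s hs
    obtain ⟨q3, q4⟩ := centre_Q k b hk hb 0 (by simp; omega)
    simp only [Function.iterate_zero, id_eq, Nat.cast_zero] at q3 q4
    have key := fun i => edge_val k (f (a, b) i) (f (1 - a, b) i) (f (a, 1 - b) i)
      (f (1 - a, 1 - b) i) ((1 - a, b) ∈ V) ((a, 1 - b) ∈ V) ((1 - a, 1 - b) ∈ V) s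
      (by positivity) (hf _ hv i) (fun m => hf _ m i)
    unfold qF
    rw [q1, q2, q3, q4]
    exact ⟨fun m => funext fun i => (key i).1 m, fun m => funext fun i => (key i).2 m⟩
  · rintro ⟨a, b⟩ hv s hs
    obtain ⟨ha, hb⟩ := hVsub hv
    obtain ⟨q1, q2⟩ := centre_Q k b hk hb s hs
    obtain ⟨q3, q4⟩ := centre_Q k a hk ha 0 (by simp; omega)
    simp only [Function.iterate_zero, id_eq, Nat.cast_zero] at q3 q4
    have key := fun i => edge_val k (f (a, b) i) (f (a, 1 - b) i) (f (1 - a, b) i)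
      (f (1 - a, 1 - b) i) ((a, 1 - b) ∈ V) ((1 - a, b) ∈ V) ((1 - a, 1 - b) ∈ V) s
      (by positivity) (hf _ hv i) (fun m => hf _ m i)
    unfold qF
    rw [q1, q2, q3, q4]
    refine ⟨fun m => funext fun i => ?_, fun m => funext fun i => ?_⟩
    · rw [qDepth_symm]
      exact (key i).1 m
    · rw [qDepth_symm]
      exact (key i).2 m
end

section
/- Let f : X → Y be a continuous map of digital images, where X ⊆ ℤ² and Y ⊆ ℤⁿ, and let k ≥ 2. Then there exists a continuous map F : S(X, k+1) → S(Y, k) covering f, i.e. ρ_k ∘ F = f ∘ ρ_{k+1} : S(X, k+1) → Y. -/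
open Set

lemma fdiv_close (k a b : ℤ) (hk : 0 < k) (h : |a - b| ≤ k) :
    |a.fdiv k - b.fdiv k| ≤ 1 := by
  rw [Int.fdiv_eq_ediv_of_nonneg _ hk.le, Int.fdiv_eq_ediv_of_nonneg _ hk.le]
  rw [abs_le] at h ⊢
  have h1 : a / k ≤ (b + 1 * k) / k := Int.ediv_le_ediv hk (by linarith)
  have h2 : b / k ≤ (a + 1 * k) / k := Int.ediv_le_ediv hk (by linarith)
  rw [Int.add_mul_ediv_right _ _ hk.ne'] at h1 h2
  constructor <;> linarith

/-- Candidate heights inside a block: `K - 1`, or one less than a distance to the level below. -/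
def heightSet {m : ℕ} (X : Set (Fin m → ℤ)) (K : ℕ) (g : (Fin m → ℤ) → ℤ)
    (p : Fin m → ℤ) : Set ℕ :=
  { r | r = K - 1 ∨ ∃ q ∈ Subdiv X ((K : ℤ) + 1),
      g (rho ((K : ℤ) + 1) q) = g (rho ((K : ℤ) + 1) p) - 1 ∧ ∀ i, |p i - q i| ≤ (r : ℤ) + 1 }

noncomputable def height {m : ℕ} (X : Set (Fin m → ℤ)) (K : ℕ) (g : (Fin m → ℤ) → ℤ)
    (p : Fin m → ℤ) : ℕ := sInf (heightSet X K g p)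

section
variable {m : ℕ} (X : Set (Fin m → ℤ)) (K : ℕ) (g : (Fin m → ℤ) → ℤ)

lemma height_le (p : Fin m → ℤ) : height X K g p ≤ K - 1 := Nat.sInf_le (Or.inl rfl)

lemma height_mem (p : Fin m → ℤ) : height X K g p ∈ heightSet X K g p :=
  Nat.sInf_mem ⟨K - 1, Or.inl rfl⟩

lemma height_lip (p p' : Fin m → ℤ) (h : adj p p')
    (hg : g (rho ((K : ℤ) + 1) p) = g (rho ((K : ℤ) + 1) p')) :
    height X K g p ≤ height X K g p' + 1 := by
  rcases height_mem X K g p' with h1 | ⟨q, hq, hgq, hd⟩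
  · have := height_le X K g p
    omega
  · refine Nat.sInf_le (Or.inr ⟨q, hq, by rw [hgq, hg], fun i => ?_⟩)
    have h1 := h i
    have h2 := hd i
    rw [abs_le] at *
    push_cast
    constructor <;> linarith

lemma height_up (hK : 1 ≤ K)
    (hc : ∀ x ∈ X, ∀ x' ∈ X, adj x x' → |g x - g x'| ≤ 1)
    (p p' : Fin m → ℤ) (hp : p ∈ Subdiv X ((K : ℤ) + 1)) (hp' : p' ∈ Subdiv X ((K : ℤ) + 1))
    (h : adj p p')
    (hg : g (rho ((K : ℤ) + 1) p') = g (rho ((K : ℤ) + 1) p) + 1) :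
    height X K g p = K - 1 ∧ height X K g p' = 0 := by
  constructor
  · rcases height_mem X K g p with h1 | ⟨q, hq, hgq, hd⟩
    · exact h1
    · exfalso
      have hle := height_le X K g p
      have hle' : (height X K g p : ℤ) + 1 ≤ K := by omega
      have ha : adj (rho ((K : ℤ) + 1) p') (rho ((K : ℤ) + 1) q) := by
        intro i
        apply fdiv_close _ _ _ (by positivity)
        have h1 := h i
        have h2 := hd i
        rw [abs_le] at *
        constructor <;> linarith
      have := hc _ hp' _ hq ha
      rw [abs_le] at this
      linarith [this.1, this.2, show g (rho ((K : ℤ) + 1) p') = g (fun i => (p' i).fdiv ((K : ℤ) + 1)) from rfl,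
        show g (rho ((K : ℤ) + 1) q) = g (fun i => (q i).fdiv ((K : ℤ) + 1)) from rfl]
  · refine Nat.le_zero.1 (Nat.sInf_le (Or.inr ⟨p, hp, by rw [hg]; ring, fun i => ?_⟩))
    rw [abs_sub_comm]
    simpa using h i

lemma scalar_adj (hK : 1 ≤ K)
    (hc : ∀ x ∈ X, ∀ x' ∈ X, adj x x' → |g x - g x'| ≤ 1)
    (p p' : Fin m → ℤ) (hp : p ∈ Subdiv X ((K : ℤ) + 1)) (hp' : p' ∈ Subdiv X ((K : ℤ) + 1))
    (h : adj p p') :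
    |((K : ℤ) * g (rho ((K : ℤ) + 1) p) + height X K g p)
      - ((K : ℤ) * g (rho ((K : ℤ) + 1) p') + height X K g p')| ≤ 1 := by
  have h' : adj p' p := fun i => by rw [abs_sub_comm]; exact h i
  have ha : adj (rho ((K : ℤ) + 1) p) (rho ((K : ℤ) + 1) p') := fun i =>
    fdiv_close _ _ _ (by positivity) ((h i).trans (by omega))
  have hb : |g (rho ((K : ℤ) + 1) p) - g (rho ((K : ℤ) + 1) p')| ≤ 1 := hc _ hp _ hp' ha
  rw [abs_le] at hb
  have hcases : g (rho ((K : ℤ) + 1) p) = g (rho ((K : ℤ) + 1) p') ∨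
      g (rho ((K : ℤ) + 1) p') = g (rho ((K : ℤ) + 1) p) + 1 ∨
      g (rho ((K : ℤ) + 1) p) = g (rho ((K : ℤ) + 1) p') + 1 := by omega
  rcases hcases with e | e | e
  · have h1 := height_lip X K g p p' h e
    have h2 := height_lip X K g p' p h' e.symm
    rw [e, abs_le]
    constructor <;> linarith [(by exact_mod_cast h1 : (height X K g p : ℤ) ≤ height X K g p' + 1),
      (by exact_mod_cast h2 : (height X K g p' : ℤ) ≤ height X K g p + 1)]
  · obtain ⟨h1, h2⟩ := height_up X K g hK hc p p' hp hp' h e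
    rw [e, h1, h2, abs_le]
    push_cast [hK]
    constructor <;> linarith
  · obtain ⟨h1, h2⟩ := height_up X K g hK hc p' p hp' hp h' e
    rw [e, h1, h2, abs_le]
    push_cast [hK]
    constructor <;> linarith

end

/-- any continuous map `f : X → Y` of digital images with `X ⊆ ℤ²`
and any `k ≥ 2` admit a continuous cover `F : S(X,k+1) → S(Y,k)` with
`ρ_k ∘ F = f ∘ ρ_{k+1}`. -/
theorem twoD_cover_exists_shift {n : ℕ} (X : Set (Fin 2 → ℤ)) (Y : Set (Fin n → ℤ))
    (hX : X.Finite) (hY : Y.Finite) (k : ℤ) (hk : 2 ≤ k)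
    (f : (Fin 2 → ℤ) → Fin n → ℤ)
    (hmaps : ∀ x ∈ X, f x ∈ Y)
    (hcont : ∀ x ∈ X, ∀ x' ∈ X, adj x x' → adj (f x) (f x')) :
    ∃ F : (Fin 2 → ℤ) → Fin n → ℤ,
      (∀ p ∈ Subdiv X (k + 1), F p ∈ Subdiv Y k) ∧
      (∀ p ∈ Subdiv X (k + 1), ∀ p' ∈ Subdiv X (k + 1),
        adj p p' → adj (F p) (F p')) ∧
      (∀ p ∈ Subdiv X (k + 1), rho k (F p) = f (rho (k + 1) p)) := by
  lift k to ℕ using (by linarith) with K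
  have hK : 1 ≤ K := by omega
  have key : ∀ p : Fin 2 → ℤ, rho (K : ℤ) (fun i => (K : ℤ) * f (rho ((K : ℤ) + 1) p) i
      + height X K (fun x => f x i) p) = f (rho ((K : ℤ) + 1) p) := by
    intro p
    funext i
    have hle := height_le X K (fun x => f x i) p
    simp only [rho]
    rw [Int.fdiv_eq_ediv_of_nonneg _ (by positivity), add_comm,
      Int.add_mul_ediv_left _ _ (by omega), Int.ediv_eq_zero_of_lt (by positivity) (by omega),
      zero_add]
  refine ⟨fun p i => (K : ℤ) * f (rho ((K : ℤ) + 1) p) i + height X K (fun x => f x i) p,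
    ?_, ?_, fun p _ => key p⟩
  · intro p hp
    have h1 : f (rho ((K : ℤ) + 1) p) ∈ Y := hmaps _ hp
    rw [← key p] at h1
    exact h1
  · intro p hp p' hp' h i
    exact scalar_adj X K (fun x => f x i) hK (fun x hx x' hx' hxx => hcont x hx x' hx' hxx i)
      p p' hp hp' h
end

section
/- Let α, β : I_M → Y be paths in a digital image Y ⊆ ℤⁿ and k ≥ 1, and let α̂, β̂ : I_{(2k+1)M+2k} → S(Y, 2k+1) be their standard covers. If α and β are homotopic, then α̂ and β̂ are homotopic as maps I_{(2k+1)M+2k} → S(Y, 2k+1). -/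
open Set

/-- `Homotopic M Y f g`: maps `f, g : I_M → Y` are homotopic, i.e. for some `N ≥ 1`
there is a continuous `H : I_M × I_N → Y` (product adjacency) with `H(x,0) = f(x)` and
`H(x,N) = g(x)` for all `x ∈ I_M`. -/
def Homotopic {n : ℕ} (M : ℤ) (Y : Set (Fin n → ℤ)) (f g : ℤ → Fin n → ℤ) : Prop :=
  ∃ N : ℤ, 1 ≤ N ∧ ∃ H : ℤ → ℤ → Fin n → ℤ,
    (∀ x ∈ Icc (0 : ℤ) M, ∀ t ∈ Icc (0 : ℤ) N, H x t ∈ Y) ∧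
    (∀ x ∈ Icc (0 : ℤ) M, ∀ t ∈ Icc (0 : ℤ) N,
      ∀ x' ∈ Icc (0 : ℤ) M, ∀ t' ∈ Icc (0 : ℤ) N,
      |x - x'| ≤ 1 → |t - t'| ≤ 1 → adj (H x t) (H x' t')) ∧
    (∀ x ∈ Icc (0 : ℤ) M, H x 0 = f x) ∧
    (∀ x ∈ Icc (0 : ℤ) M, H x N = g x)

/-- Globally defined homotopy in `Z`. -/
def GH {n : ℕ} (Z : Set (Fin n → ℤ)) (f g : ℤ → Fin n → ℤ) : Prop :=
  ∃ N : ℤ, 0 ≤ N ∧ ∃ H : ℤ → ℤ → Fin n → ℤ,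
    (∀ x t, H x t ∈ Z) ∧
    (∀ x t x' t', |x - x'| ≤ 1 → |t - t'| ≤ 1 → adj (H x t) (H x' t')) ∧
    (∀ x, H x 0 = f x) ∧ (∀ x, H x N = g x)

theorem GH.symm {n : ℕ} {Z : Set (Fin n → ℤ)} {f g : ℤ → Fin n → ℤ} (h : GH Z f g) :
    GH Z g f := by
  obtain ⟨N, hN, H, h1, h2, h3, h4⟩ := h
  refine ⟨N, hN, fun x t => H x (N - t), fun x t => h1 _ _, ?_, ?_, ?_⟩
  · intro x t x' t' hx ht
    apply h2 _ _ _ _ hx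
    rw [abs_le] at *
    constructor <;> linarith [ht.1, ht.2]
  · intro x; simpa using h4 x
  · intro x; simpa using h3 x

theorem adj_symm' {n : ℕ} {x y : Fin n → ℤ} (h : adj x y) : adj y x := by
  intro i; rw [abs_sub_comm]; exact h i

theorem GH.trans {n : ℕ} {Z : Set (Fin n → ℤ)} {f g e : ℤ → Fin n → ℤ} (h : GH Z f g)
    (h' : GH Z g e) : GH Z f e := by
  obtain ⟨N, hN, H, h1, h2, h3, h4⟩ := h
  obtain ⟨N', hN', H', h1', h2', h3', h4'⟩ := h'
  have key : ∀ x t x' t', |x - x'| ≤ 1 → |t - t'| ≤ 1 → t ≤ N → N < t' →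
      adj (H x t) (H' x' (t' - N)) := by
    intro x t x' t' hx ht a b
    rw [abs_le] at ht
    have : t = N := by omega
    subst this
    rw [h4, ← h3']
    apply h2' _ _ _ _ hx
    rw [abs_le]; omega
  refine ⟨N + N', by omega, fun x t => if t ≤ N then H x t else H' x (t - N), ?_, ?_, ?_, ?_⟩
  · intro x t
    dsimp only
    split_ifs
    · exact h1 _ _
    · exact h1' _ _
  · intro x t x' t' hx ht
    dsimp only
    split_ifs with a b b
    · exact h2 _ _ _ _ hx ht
    · exact key _ _ _ _ hx ht a (by omega)
    · exact adj_symm' (key _ _ _ _ (by rwa [abs_sub_comm]) (by rwa [abs_sub_comm]) b (by omega))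
    · apply h2' _ _ _ _ hx
      rw [abs_le] at *; omega
  · intro x; simp [hN, h3]
  · intro x
    dsimp only
    split_ifs with a
    · have : N' = 0 := by omega
      subst this
      rw [add_zero, h4, ← h3', h4']
    · rw [← h4']; congr 1; omega

theorem bdd_subdiv {n : ℕ} (Y : Set (Fin n → ℤ)) (hY : Y.Finite) (m : ℤ) (hm : 0 < m) :
    ∃ L : ℤ, 0 ≤ L ∧ ∀ y ∈ Subdiv Y m, ∀ i, |y i| ≤ L := by
  have h1 : ∃ B : ℤ, 0 ≤ B ∧ ∀ y ∈ Y, ∀ i, |y i| ≤ B := by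
    refine ⟨∑ y ∈ hY.toFinset, ∑ i, |y i|, by positivity, ?_⟩
    intro y hy i
    calc |y i| ≤ ∑ i, |y i| :=
          Finset.single_le_sum (f := fun i => |y i|) (fun _ _ => abs_nonneg _) (Finset.mem_univ i)
      _ ≤ _ := Finset.single_le_sum (f := fun y : Fin n → ℤ => ∑ i, |y i|)
          (fun _ _ => Finset.sum_nonneg fun _ _ => abs_nonneg _) (hY.mem_toFinset.2 hy)
  obtain ⟨B, hB, h⟩ := h1
  refine ⟨m * B + m, by positivity, ?_⟩
  intro y hy i
  have := h _ hy i
  simp only [Int.fdiv_eq_ediv_of_nonneg _ hm.le] at this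
  have e := Int.mul_ediv_add_emod (y i) m
  have e1 := Int.emod_nonneg (y i) hm.ne'
  have e2 := Int.emod_lt_of_pos (y i) hm
  rw [abs_le] at *
  constructor <;> nlinarith

theorem gh_max {n : ℕ} (Y : Set (Fin n → ℤ)) (hY : Y.Finite) (m : ℤ) (hm : 0 < m)
    (f g : ℤ → Fin n → ℤ) (hf : ∀ x, f x ∈ Subdiv Y m) (hfg : ∀ x, rho m (f x) = rho m (g x))
    (cf : ∀ x x', |x - x'| ≤ 1 → adj (f x) (f x')) (cg : ∀ x x', |x - x'| ≤ 1 → adj (g x) (g x')) :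
    GH (Subdiv Y m) f (fun x i => max (f x i) (g x i)) := by
  obtain ⟨L, hL, hb⟩ := bdd_subdiv Y hY m hm
  have hg : ∀ x, g x ∈ Subdiv Y m := by
    intro x
    have h2 : rho m (f x) ∈ Y := hf x
    rw [hfg] at h2
    exact h2
  refine ⟨2 * L, by omega, fun x t i => max (f x i) (min (g x i) (t - L)), ?_, ?_, ?_, ?_⟩
  · intro x t
    have : (fun i => Int.fdiv (max (f x i) (min (g x i) (t - L))) m) = fun i => Int.fdiv (f x i) m := by
      funext i
      have h1 := congrFun (hfg x) i
      simp only [rho, Int.fdiv_eq_ediv_of_nonneg _ hm.le] at h1 ⊢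
      apply le_antisymm
      · have : max (f x i) (min (g x i) (t - L)) ≤ max (f x i) (g x i) := by
          omega
        refine (Int.ediv_le_ediv hm this).trans ?_
        rcases max_choice (f x i) (g x i) with h | h <;> rw [h]
        exact h1.ge
      · exact Int.ediv_le_ediv hm (le_max_left _ _)
    change (fun i => Int.fdiv (max (f x i) (min (g x i) (t - L))) m) ∈ Y
    rw [this]; exact hf x
  · intro x t x' t' hx ht i
    have h1 := cf x x' hx i
    have h2 := cg x x' hx i
    dsimp only
    rw [abs_le] at *
    omega
  · intro x; funext i
    have h1 := hb _ (hf x) i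
    rw [abs_le] at h1
    dsimp only; omega
  · intro x; funext i
    have h1 := hb _ (hg x) i
    rw [abs_le] at h1
    dsimp only; omega

theorem gh_of_rho {n : ℕ} (Y : Set (Fin n → ℤ)) (hY : Y.Finite) (m : ℤ) (hm : 0 < m)
    (f g : ℤ → Fin n → ℤ) (hf : ∀ x, f x ∈ Subdiv Y m) (hfg : ∀ x, rho m (f x) = rho m (g x))
    (cf : ∀ x x', |x - x'| ≤ 1 → adj (f x) (f x')) (cg : ∀ x x', |x - x'| ≤ 1 → adj (g x) (g x')) :
    GH (Subdiv Y m) f g := by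
  have hg : ∀ x, g x ∈ Subdiv Y m := by
    intro x
    have h2 : rho m (f x) ∈ Y := hf x
    rw [hfg] at h2
    exact h2
  have h1 := gh_max Y hY m hm f g hf hfg cf cg
  have h2 := gh_max Y hY m hm g f hg (fun x => (hfg x).symm) cg cf
  have e : (fun x i => max (g x i) (f x i)) = (fun x i => max (f x i) (g x i)) := by
    funext x i; exact max_comm _ _
  rw [e] at h2
  exact h1.trans h2.symm

/-- Lipschitz property of adjacency-preserving functions on the plane. -/
theorem lip_of_adj (a : ℤ → ℤ → ℤ)
    (ha : ∀ x t x' t', |x - x'| ≤ 1 → |t - t'| ≤ 1 → |a x t - a x' t'| ≤ 1) (r : ℕ) :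
    ∀ x t x' t' : ℤ, |x - x'| ≤ (r : ℤ) → |t - t'| ≤ (r : ℤ) → |a x t - a x' t'| ≤ (r : ℤ) := by
  induction r with
  | zero =>
    intro x t x' t' hx ht
    have h1 : x = x' := by rw [abs_le] at hx; push_cast at hx; omega
    have h2 : t = t' := by rw [abs_le] at ht; push_cast at ht; omega
    subst h1 h2; simp
  | succ r ih =>
    intro x t x' t' hx ht
    have key : ∀ u v : ℤ, |u - v| ≤ ((r + 1 : ℕ) : ℤ) → ∃ w, |u - w| ≤ 1 ∧ |w - v| ≤ (r : ℤ) := by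
      intro u v h
      refine ⟨max (u - 1) (min (u + 1) v), ?_, ?_⟩
      all_goals push_cast at h; rw [abs_le] at h ⊢; omega
    obtain ⟨y, hy1, hy2⟩ := key x x' hx
    obtain ⟨s, hs1, hs2⟩ := key t t' ht
    have h1 := ha x t y s hy1 hs1
    have h2 := ih y s x' t' hy2 hs2
    push_cast
    rw [abs_le] at *
    omega

theorem ediv_lip (m : ℤ) (hm : 0 < m) (x y : ℤ) : m * |x / m - y / m| ≤ |x - y| + m - 1 := by
  have e := Int.mul_ediv_add_emod x m
  have e1 := Int.emod_nonneg x hm.ne'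
  have e2 := Int.emod_lt_of_pos x hm
  have f := Int.mul_ediv_add_emod y m
  have f1 := Int.emod_nonneg y hm.ne'
  have f2 := Int.emod_lt_of_pos y hm
  rcases abs_cases (x / m - y / m) with h | h <;> rw [h.1] <;>
  rcases abs_cases (x - y) with h' | h' <;> rw [h'.1] <;> nlinarith

/-- Scalar lifting of planar maps through subdivision. -/
theorem exists_lift (m : ℤ) (hm : 0 < m) (a : ℤ → ℤ → ℤ)
    (ha : ∀ x t x' t', |x - x'| ≤ 1 → |t - t'| ≤ 1 → |a x t - a x' t'| ≤ 1) :
    ∃ F : ℤ → ℤ → ℤ, (∀ x t x' t', |x - x'| ≤ 1 → |t - t'| ≤ 1 → |F x t - F x' t'| ≤ 1) ∧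
      ∀ x t, (F x t) / m = a (x / m) (t / m) := by
  let v : ℤ → ℤ → ℤ × ℤ → ℤ := fun x t q =>
    m * a (q.1 / m) (q.2 / m) + (m - 1) + max |x - q.1| |t - q.2|
  have low : ∀ x t q, m * a (x / m) (t / m) ≤ v x t q := by
    intro x t q
    obtain ⟨r, hr⟩ := Int.eq_ofNat_of_zero_le
      (le_max_of_le_left (abs_nonneg _) : 0 ≤ max |x / m - q.1 / m| |t / m - q.2 / m|)
    have h1 := lip_of_adj a ha r (x / m) (t / m) (q.1 / m) (q.2 / m)
      (hr ▸ le_max_left _ _) (hr ▸ le_max_right _ _)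
    have h2 := ediv_lip m hm x q.1
    have h3 := ediv_lip m hm t q.2
    have h4 : m * (r : ℤ) ≤ max |x - q.1| |t - q.2| + m - 1 := by
      rw [← hr]
      rcases max_choice |x / m - q.1 / m| |t / m - q.2 / m| with h | h <;> rw [h]
      · exact h2.trans (by linarith [le_max_left |x - q.1| |t - q.2|])
      · exact h3.trans (by linarith [le_max_right |x - q.1| |t - q.2|])
    have h5 := (abs_le.1 h1).2
    have h6 := mul_le_mul_of_nonneg_left h5 hm.le
    simp only [v]
    linarith
  have bd : ∀ x t, BddBelow (Set.range (v x t)) := by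
    intro x t
    refine ⟨m * a (x / m) (t / m), ?_⟩
    rintro _ ⟨q, rfl⟩
    exact low x t q
  have att : ∀ x t, ∃ q, v x t q = sInf (Set.range (v x t)) := fun x t =>
    Int.csInf_mem (Set.range_nonempty _) (bd x t)
  have one : ∀ x t x' t', |x - x'| ≤ 1 → |t - t'| ≤ 1 →
      sInf (Set.range (v x t)) ≤ sInf (Set.range (v x' t')) + 1 := by
    intro x t x' t' hx ht
    obtain ⟨q, hq⟩ := att x' t'
    rw [← hq]
    refine (csInf_le (bd x t) ⟨q, rfl⟩).trans ?_
    have h1 := abs_sub_le x x' q.1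
    have h2 := abs_sub_le t t' q.2
    simp only [v]
    omega
  refine ⟨fun x t => sInf (Set.range (v x t)), ?_, ?_⟩
  · intro x t x' t' hx ht
    have h1 := one x t x' t' hx ht
    have h2 := one x' t' x t (by rwa [abs_sub_comm]) (by rwa [abs_sub_comm])
    dsimp only
    rw [abs_le]; omega
  · intro x t
    have h1 : m * a (x / m) (t / m) ≤ sInf (Set.range (v x t)) := by
      obtain ⟨q, hq⟩ := att x t
      rw [← hq]; exact low x t q
    have h2 : sInf (Set.range (v x t)) ≤ m * a (x / m) (t / m) + (m - 1) := by
      refine (csInf_le (bd x t) ⟨(x, t), rfl⟩).trans ?_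
      simp [v]
    dsimp only
    apply le_antisymm
    · apply Int.lt_add_one_iff.1
      apply Int.ediv_lt_of_lt_mul hm
      linarith
    · apply Int.le_ediv_of_mul_le hm
      linarith

/-- Clamp to the interval `[0, M]`. -/
def clampZ (M x : ℤ) : ℤ := max 0 (min M x)

theorem clampZ_mem {M : ℤ} (hM : 0 ≤ M) (x : ℤ) : clampZ M x ∈ Icc (0 : ℤ) M := by
  simp only [clampZ, Set.mem_Icc]; omega

theorem clampZ_lip (M x y : ℤ) (h : |x - y| ≤ 1) : |clampZ M x - clampZ M y| ≤ 1 := by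
  simp only [clampZ]; rw [abs_le] at *; omega

theorem clampZ_id {M x : ℤ} (hx : x ∈ Icc (0 : ℤ) M) : clampZ M x = x := by
  simp only [clampZ, Set.mem_Icc] at *; omega

/-- Uniform formula for the cover. -/
theorem cover_eq {n : ℕ} (k M : ℤ) (hk : 1 ≤ k) (hM : 1 ≤ M) (α : ℤ → Fin n → ℤ) (j : ℤ)
    (i : Fin n) : cover k M α j i =
      (2 * k + 1) * α (clampZ M ((j - k) / (2 * k + 1))) i + k + ((j - k) % (2 * k + 1)) *
          (α (clampZ M ((j - k) / (2 * k + 1) + 1)) i - α (clampZ M ((j - k) / (2 * k + 1))) i) := by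
  have hm : 0 < 2 * k + 1 := by omega
  unfold cover
  simp only [Int.fdiv_eq_ediv_of_nonneg _ hm.le]
  split_ifs with h1 h2
  · have hq : (j - k) / (2 * k + 1) < 0 := Int.ediv_neg_of_neg_of_pos (by omega) hm
    have e1 : clampZ M ((j - k) / (2 * k + 1)) = 0 := by simp only [clampZ]; omega
    have e2 : clampZ M ((j - k) / (2 * k + 1) + 1) = 0 := by simp only [clampZ]; omega
    rw [e1, e2]; simp [barPt]
  · have hq : M ≤ (j - k) / (2 * k + 1) := Int.le_ediv_of_mul_le hm (by linarith)
    have e1 : clampZ M ((j - k) / (2 * k + 1)) = M := by simp only [clampZ]; omega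
    have e2 : clampZ M ((j - k) / (2 * k + 1) + 1) = M := by simp only [clampZ]; omega
    rw [e1, e2]; simp [barPt]
  · have hq : 0 ≤ (j - k) / (2 * k + 1) := Int.ediv_nonneg (by omega) hm.le
    have hq' : (j - k) / (2 * k + 1) < M := Int.ediv_lt_of_lt_mul hm (by linarith)
    rw [clampZ_id ⟨hq, hq'.le⟩, clampZ_id ⟨by omega, by omega⟩]
    simp [barPt]

theorem divmod_unique {m x q r : ℤ} (h : x = m * q + r) (h0 : 0 ≤ r) (h1 : r < m) :
    x / m = q ∧ x % m = r := by
  have hm : 0 < m := by omega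
  exact (Int.ediv_emod_unique hm).2 ⟨by linarith, h0, h1⟩

theorem cover_step {n : ℕ} (k M : ℤ) (hk : 1 ≤ k) (hM : 1 ≤ M) (α : ℤ → Fin n → ℤ)
    (hα : ∀ i ∈ Icc (0 : ℤ) M, ∀ i' ∈ Icc (0 : ℤ) M, |i - i'| ≤ 1 → adj (α i) (α i'))
    (j : ℤ) (i : Fin n) : |cover k M α j i - cover k M α (j + 1) i| ≤ 1 := by
  have hm : 0 < 2 * k + 1 := by omega
  rw [cover_eq k M hk hM, cover_eq k M hk hM]
  have e := Int.mul_ediv_add_emod (j - k) (2 * k + 1)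
  have e1 := Int.emod_nonneg (j - k) hm.ne'
  have e2 := Int.emod_lt_of_pos (j - k) hm
  generalize (j - k) / (2 * k + 1) = q at *
  generalize (j - k) % (2 * k + 1) = r at *
  have hd := hα _ (clampZ_mem (by omega) q) _ (clampZ_mem (by omega) (q + 1))
    (clampZ_lip M q (q + 1) (by simp)) i
  by_cases h : r < 2 * k
  · obtain ⟨u1, u2⟩ := divmod_unique (m := 2 * k + 1) (x := j + 1 - k) (q := q) (r := r + 1)
      (by linarith) (by omega) (by omega)
    rw [u1, u2]
    rw [abs_le] at *
    constructor <;> linarith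
  · obtain ⟨u1, u2⟩ := divmod_unique (m := 2 * k + 1) (x := j + 1 - k) (q := q + 1) (r := 0)
      (by linarith) (by omega) (by omega)
    have hr : r = 2 * k := by omega
    rw [u1, u2, hr]
    rw [abs_le] at *
    constructor <;> linarith

theorem cover_cont {n : ℕ} (k M : ℤ) (hk : 1 ≤ k) (hM : 1 ≤ M) (α : ℤ → Fin n → ℤ)
    (hα : ∀ i ∈ Icc (0 : ℤ) M, ∀ i' ∈ Icc (0 : ℤ) M, |i - i'| ≤ 1 → adj (α i) (α i'))
    (j j' : ℤ) (h : |j - j'| ≤ 1) : adj (cover k M α j) (cover k M α j') := by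
  intro i
  rw [abs_le] at h
  have : j' = j ∨ j' = j + 1 ∨ j = j' + 1 := by omega
  rcases this with rfl | rfl | rfl
  · simp
  · exact cover_step k M hk hM α hα _ i
  · rw [abs_sub_comm]; exact cover_step k M hk hM α hα _ i

theorem cover_rho {n : ℕ} (k M : ℤ) (hk : 1 ≤ k) (hM : 1 ≤ M) (α : ℤ → Fin n → ℤ)
    (hα : ∀ i ∈ Icc (0 : ℤ) M, ∀ i' ∈ Icc (0 : ℤ) M, |i - i'| ≤ 1 → adj (α i) (α i'))
    (j : ℤ) : rho (2 * k + 1) (cover k M α j) = α (clampZ M (j / (2 * k + 1))) := by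
  have hm : 0 < 2 * k + 1 := by omega
  funext i
  simp only [rho, Int.fdiv_eq_ediv_of_nonneg _ hm.le]
  rw [cover_eq k M hk hM]
  have e := Int.mul_ediv_add_emod (j - k) (2 * k + 1)
  have e1 := Int.emod_nonneg (j - k) hm.ne'
  have e2 := Int.emod_lt_of_pos (j - k) hm
  generalize (j - k) / (2 * k + 1) = q at *
  generalize (j - k) % (2 * k + 1) = r at *
  have hd := hα _ (clampZ_mem (by omega) q) _ (clampZ_mem (by omega) (q + 1))
    (clampZ_lip M q (q + 1) (by simp)) i
  rw [abs_le] at hd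
  by_cases h : r ≤ k
  · obtain ⟨u1, -⟩ := divmod_unique (m := 2 * k + 1) (x := j) (q := q) (r := r + k)
      (by linarith) (by omega) (by omega)
    rw [u1]
    exact (divmod_unique (r := k + r *
      (α (clampZ M (q + 1)) i - α (clampZ M q) i)) (by ring) (by nlinarith) (by nlinarith)).1
  · obtain ⟨u1, -⟩ := divmod_unique (m := 2 * k + 1) (x := j) (q := q + 1) (r := r - k - 1)
      (by linarith) (by omega) (by omega)
    rw [u1]
    exact (divmod_unique (r := k + (r - (2 * k + 1)) *
      (α (clampZ M (q + 1)) i - α (clampZ M q) i)) (by ring) (by nlinarith) (by nlinarith)).1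

/-- if paths `α, β : I_M → Y` are homotopic, then their standard covers
`α̂, β̂ : I_{(2k+1)M+2k} → S(Y,2k+1)` are homotopic. -/
theorem covers_homotopic {n : ℕ} (Y : Set (Fin n → ℤ)) (hY : Y.Finite)
    (M k : ℤ) (hM : 1 ≤ M) (hk : 1 ≤ k)
    (α β : ℤ → Fin n → ℤ)
    (hαmaps : ∀ i ∈ Icc (0 : ℤ) M, α i ∈ Y)
    (hαcont : ∀ i ∈ Icc (0 : ℤ) M, ∀ i' ∈ Icc (0 : ℤ) M, |i - i'| ≤ 1 → adj (α i) (α i'))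
    (hβmaps : ∀ i ∈ Icc (0 : ℤ) M, β i ∈ Y)
    (hβcont : ∀ i ∈ Icc (0 : ℤ) M, ∀ i' ∈ Icc (0 : ℤ) M, |i - i'| ≤ 1 → adj (β i) (β i'))
    (hhom : Homotopic M Y α β) :
    Homotopic ((2 * k + 1) * M + 2 * k) (Subdiv Y (2 * k + 1))
      (cover k M α) (cover k M β) := by
  have hm : 0 < 2 * k + 1 := by omega
  obtain ⟨N, hN, H, h1, h2, h3, h4⟩ := hhom
  have hM0 : 0 ≤ M := by omega
  have hN0 : 0 ≤ N := by omega
  have hlift := fun i => exists_lift (2 * k + 1) hm (fun x t => H (clampZ M x) (clampZ N t) i)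
    (fun x t x' t' hx ht => h2 _ (clampZ_mem hM0 x) _ (clampZ_mem hN0 t) _ (clampZ_mem hM0 x') _
      (clampZ_mem hN0 t') (clampZ_lip M x x' hx) (clampZ_lip N t t' ht) i)
  choose F hF1 hF2 using hlift
  have hFr : ∀ x t, rho (2 * k + 1) (fun i => F i x t) =
      H (clampZ M (x / (2 * k + 1))) (clampZ N (t / (2 * k + 1))) := by
    intro x t; funext i
    simp only [rho, Int.fdiv_eq_ediv_of_nonneg _ hm.le]
    exact hF2 i x t
  have gF : GH (Subdiv Y (2 * k + 1)) (fun x i => F i x 0) (fun x i => F i x ((2 * k + 1) * N)) := by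
    refine ⟨(2 * k + 1) * N, by positivity, fun x t i => F i x t, ?_, ?_, fun _ => rfl, fun _ => rfl⟩
    · intro x t
      change rho (2 * k + 1) (fun i => F i x t) ∈ Y
      rw [hFr]; exact h1 _ (clampZ_mem hM0 _) _ (clampZ_mem hN0 _)
    · intro x t x' t' hx ht i
      exact hF1 i x t x' t' hx ht
  have gα : GH (Subdiv Y (2 * k + 1)) (cover k M α) (fun x i => F i x 0) := by
    apply gh_of_rho Y hY _ hm
    · intro x
      change rho (2 * k + 1) (cover k M α x) ∈ Y
      rw [cover_rho k M hk hM α hαcont]; exact hαmaps _ (clampZ_mem hM0 _)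
    · intro x
      rw [cover_rho k M hk hM α hαcont, hFr, ← h3 _ (clampZ_mem hM0 _)]
      congr 1
      rw [Int.zero_ediv, clampZ_id ⟨le_refl 0, hN0⟩]
    · exact cover_cont k M hk hM α hαcont
    · intro x x' hx i
      exact hF1 i x 0 x' 0 hx (by simp)
  have gβ : GH (Subdiv Y (2 * k + 1)) (cover k M β) (fun x i => F i x ((2 * k + 1) * N)) := by
    apply gh_of_rho Y hY _ hm
    · intro x
      change rho (2 * k + 1) (cover k M β x) ∈ Y
      rw [cover_rho k M hk hM β hβcont]; exact hβmaps _ (clampZ_mem hM0 _)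
    · intro x
      rw [cover_rho k M hk hM β hβcont, hFr, ← h4 _ (clampZ_mem hM0 _)]
      congr 1
      rw [Int.mul_ediv_cancel_left _ hm.ne', clampZ_id ⟨hN0, le_refl N⟩]
    · exact cover_cont k M hk hM β hβcont
    · intro x x' hx i
      exact hF1 i x _ x' _ hx (by simp)
  obtain ⟨P, hP, G, g1, g2, g3, g4⟩ := (gα.trans gF).trans gβ.symm
  refine ⟨P + 1, by omega, fun x t => G x (min P t), fun x _ t _ => g1 _ _, ?_, ?_, ?_⟩
  · intro x _ t _ x' _ t' _ hx ht
    apply g2 _ _ _ _ hx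
    rw [abs_le] at *; omega
  · intro x _
    simp only [min_eq_right hP, g3]
  · intro x _
    simp only [min_eq_left (by omega : P ≤ P + 1), g4]
end

section
/- Let α, β : I_M → Y be loops in a digital image Y ⊆ ℤⁿ based at y₀ (α(0) = α(M) = y₀ = β(0) = β(M)), let k ≥ 1, and let α̂, β̂ : I_L → S(Y, 2k+1), L = (2k+1)M+2k, be their standard covers. Then α̂ and β̂ are loops of length L in S(Y, 2k+1) based at ȳ₀ = (2k+1)y₀ + (k,…,k), and if α and β are homotopic via a based homotopy of based loops, then α̂ and β̂ are homotopic via a based homotopy of based loops. -/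
open Set

/-- `BasedLoopHomotopic M Y y₀ f g`: loops `f, g : I_M → Y` based at `y₀` are
homotopic via a based homotopy of based loops. -/
def BasedLoopHomotopic {n : ℕ} (M : ℤ) (Y : Set (Fin n → ℤ)) (y₀ : Fin n → ℤ)
    (f g : ℤ → Fin n → ℤ) : Prop :=
  ∃ N : ℤ, 1 ≤ N ∧ ∃ H : ℤ → ℤ → Fin n → ℤ,
    (∀ x ∈ Icc (0 : ℤ) M, ∀ t ∈ Icc (0 : ℤ) N, H x t ∈ Y) ∧
    (∀ x ∈ Icc (0 : ℤ) M, ∀ t ∈ Icc (0 : ℤ) N,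
      ∀ x' ∈ Icc (0 : ℤ) M, ∀ t' ∈ Icc (0 : ℤ) N,
      |x - x'| ≤ 1 → |t - t'| ≤ 1 → adj (H x t) (H x' t')) ∧
    (∀ x ∈ Icc (0 : ℤ) M, H x 0 = f x) ∧
    (∀ x ∈ Icc (0 : ℤ) M, H x N = g x) ∧
    (∀ t ∈ Icc (0 : ℤ) N, H 0 t = y₀) ∧
    (∀ t ∈ Icc (0 : ℤ) N, H M t = y₀)

/-- Interpolation of a globally defined sequence of points. -/
def lin {n : ℕ} (k : ℤ) (f : ℤ → Fin n → ℤ) (j : ℤ) : Fin n → ℤ := fun c =>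
  (2 * k + 1) * f ((j - k) / (2 * k + 1)) c + k
    + ((j - k) % (2 * k + 1)) * (f ((j - k) / (2 * k + 1) + 1) c - f ((j - k) / (2 * k + 1)) c)

/-- Restriction of an integer to `[0, M]`. -/
def clampI (M i : ℤ) : ℤ := max 0 (min M i)

/-- Coordinatewise median. -/
def med3 (A B T : ℤ) : ℤ := max (min A B) (min (max A B) T)

lemma cover_eq_lin {n : ℕ} (k M : ℤ) (hk : 1 ≤ k) (hM : 1 ≤ M) (f : ℤ → Fin n → ℤ) (j : ℤ) :
    cover k M f j = lin k (fun i => f (clampI M i)) j := by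
  have hK : 0 < 2 * k + 1 := by omega
  unfold cover
  rw [Int.fdiv_eq_ediv_of_nonneg _ hK.le]
  have h1 := Int.mul_ediv_add_emod (j - k) (2 * k + 1)
  have h2 := Int.emod_nonneg (j - k) hK.ne'
  have h3 := Int.emod_lt_of_pos (j - k) hK
  unfold lin
  set q := (j - k) / (2 * k + 1)
  set r := (j - k) % (2 * k + 1)
  funext c
  split_ifs with ha hb
  · have hq : q ≤ -1 := by
      by_contra h
      have : 0 ≤ q := by omega
      nlinarith
    have e1 : clampI M q = 0 := by unfold clampI; omega
    have e2 : clampI M (q + 1) = 0 := by unfold clampI; omega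
    simp [e1, e2, barPt]
  · have hq : M ≤ q := by
      by_contra h
      have : q + 1 ≤ M := by omega
      nlinarith
    have e1 : clampI M q = M := by unfold clampI; omega
    have e2 : clampI M (q + 1) = M := by unfold clampI; omega
    simp [e1, e2, barPt]
  · have hq : q < M := by
      by_contra h
      have : M ≤ q := by omega
      nlinarith
    have hq : 0 ≤ q := by
      by_contra h
      have : q + 1 ≤ 0 := by omega
      nlinarith
    have e1 : clampI M q = q := by unfold clampI; omega
    have e2 : clampI M (q + 1) = q + 1 := by unfold clampI; omega
    simp [e1, e2, barPt]

lemma lin_at {n : ℕ} (k : ℤ) (hk : 1 ≤ k) (f : ℤ → Fin n → ℤ) (q s : ℤ) (hs : 0 ≤ s)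
    (hs' : s ≤ 2 * k + 1) (c : Fin n) :
    lin k f ((2 * k + 1) * q + k + s) c
      = (2 * k + 1) * f q c + k + s * (f (q + 1) c - f q c) := by
  have hK : 0 < 2 * k + 1 := by omega
  unfold lin
  rcases eq_or_lt_of_le hs' with h | h
  · have e : (2 * k + 1) * q + k + s - k = (2 * k + 1) * (q + 1) := by rw [h]; ring
    rw [e, Int.mul_ediv_cancel_left _ hK.ne', Int.mul_emod_right, h]
    ring
  · have e : (2 * k + 1) * q + k + s - k = s + (2 * k + 1) * q := by ring
    rw [e, Int.add_mul_ediv_left _ _ hK.ne', Int.add_mul_emod_self_left,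
      Int.ediv_eq_zero_of_lt hs h, Int.emod_eq_of_lt hs h, zero_add]

lemma exists_pos (k : ℤ) (hk : 1 ≤ k) (j : ℤ) :
    ∃ q s, 0 ≤ s ∧ s ≤ 2 * k ∧ j = (2 * k + 1) * q + k + s := by
  have hK : 0 < 2 * k + 1 := by omega
  have h1 := Int.mul_ediv_add_emod (j - k) (2 * k + 1)
  have h2 := Int.emod_nonneg (j - k) hK.ne'
  have h3 := Int.emod_lt_of_pos (j - k) hK
  exact ⟨(j - k) / (2 * k + 1), (j - k) % (2 * k + 1), h2, by omega, by omega⟩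

lemma lin_step {n : ℕ} (k : ℤ) (hk : 1 ≤ k) (f : ℤ → Fin n → ℤ)
    (hf : ∀ i, adj (f i) (f (i + 1))) (j : ℤ) (c : Fin n) :
    |lin k f j c - lin k f (j + 1) c| ≤ 1 := by
  obtain ⟨q, s, h0, h1, rfl⟩ := exists_pos k hk j
  rw [add_assoc ((2 * k + 1) * q + k) s 1, lin_at k hk f q s h0 (by omega),
    lin_at k hk f q (s + 1) (by omega) (by omega)]
  have e : (2 * k + 1) * f q c + k + s * (f (q + 1) c - f q c)
      - ((2 * k + 1) * f q c + k + (s + 1) * (f (q + 1) c - f q c)) = f q c - f (q + 1) c := by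
    ring
  rw [e]
  exact hf q c

lemma lin_lip {n : ℕ} (k : ℤ) (hk : 1 ≤ k) (f : ℤ → Fin n → ℤ)
    (hf : ∀ i, adj (f i) (f (i + 1))) (j j' : ℤ) (h : |j - j'| ≤ 1) (c : Fin n) :
    |lin k f j c - lin k f j' c| ≤ 1 := by
  rw [abs_le] at h
  obtain h | h | h : j' = j ∨ j' = j + 1 ∨ j = j' + 1 := by omega
  · subst h; simp
  · subst h; exact lin_step k hk f hf j c
  · subst h; rw [abs_sub_comm]; exact lin_step k hk f hf j' c

lemma mem_subdiv {n : ℕ} {Y : Set (Fin n → ℤ)} {k : ℤ} (hk : 1 ≤ k) {v y : Fin n → ℤ}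
    (hv : v ∈ Y) (h : ∀ c, (2 * k + 1) * v c ≤ y c ∧ y c ≤ (2 * k + 1) * v c + 2 * k) :
    y ∈ Subdiv Y (2 * k + 1) := by
  have hK : 0 < 2 * k + 1 := by omega
  have : (fun i => (y i).fdiv (2 * k + 1)) = v := by
    funext c
    rw [Int.fdiv_eq_ediv_of_nonneg _ hK.le]
    obtain ⟨h1, h2⟩ := h c
    have e : y c = (y c - (2 * k + 1) * v c) + (2 * k + 1) * v c := by ring
    rw [e, Int.add_mul_ediv_left _ _ hK.ne', Int.ediv_eq_zero_of_lt (by omega) (by omega),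
      zero_add]
  show (fun i => (y i).fdiv (2 * k + 1)) ∈ Y
  rw [this]; exact hv

/-- a difference of adjacent coordinates is `-1`, `0` or `1`. -/
lemma diff_cases {a b : ℤ} (h : |a - b| ≤ 1) : b = a - 1 ∨ b = a ∨ b = a + 1 := by
  rw [abs_le] at h; omega

lemma lin_mem {n : ℕ} {Y : Set (Fin n → ℤ)} (k : ℤ) (hk : 1 ≤ k) (f : ℤ → Fin n → ℤ)
    (hY : ∀ i, f i ∈ Y) (hf : ∀ i, adj (f i) (f (i + 1))) (j : ℤ) :
    lin k f j ∈ Subdiv Y (2 * k + 1) := by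
  obtain ⟨q, s, h0, h1, rfl⟩ := exists_pos k hk j
  by_cases hs : s ≤ k
  · refine mem_subdiv hk (hY q) fun c => ?_
    rw [lin_at k hk f q s h0 (by omega)]
    rcases diff_cases (hf q c) with h | h | h <;> rw [h] <;> ring_nf <;> constructor <;> linarith
  · refine mem_subdiv hk (hY (q + 1)) fun c => ?_
    rw [lin_at k hk f q s h0 (by omega)]
    rcases diff_cases (hf q c) with h | h | h <;> rw [h] <;> ring_nf <;> constructor <;> linarith

lemma med3_lip {A B T A' B' T' : ℤ} (h1 : |A - A'| ≤ 1) (h2 : |B - B'| ≤ 1) (h3 : |T - T'| ≤ 1) :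
    |med3 A B T - med3 A' B' T'| ≤ 1 := by
  rw [abs_le] at *
  unfold med3
  omega

lemma med3_self (A T : ℤ) : med3 A A T = A := by unfold med3; omega

/-- Scalar facts about the median homotopy near the modified vertex. -/
lemma med3_scalar (k a b c s t : ℤ) (hk : 1 ≤ k) (hab : |a - b| ≤ 1) (hac : |a - c| ≤ 1)
    (hcb : |c - b| ≤ 1) (hs : 0 ≤ s) (hs' : s ≤ 2 * k + 1) (ht : 0 ≤ t) (ht' : t ≤ 2 * k + 1)
    (F : ℤ) (hF : F = med3 ((2 * k + 1) * a + k + s * (b - a)) ((2 * k + 1) * c + k + s * (b - c))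
      ((2 * k + 1) * a + k + t * (c - a))) :
    (t = 0 → F = (2 * k + 1) * a + k + s * (b - a)) ∧
    (t = 2 * k + 1 → F = (2 * k + 1) * c + k + s * (b - c)) ∧
    (s ≤ k → t ≤ k → (2 * k + 1) * a ≤ F ∧ F ≤ (2 * k + 1) * a + 2 * k) ∧
    (s ≤ k → k < t → (2 * k + 1) * c ≤ F ∧ F ≤ (2 * k + 1) * c + 2 * k) ∧
    (k < s → (2 * k + 1) * b ≤ F ∧ F ≤ (2 * k + 1) * b + 2 * k) := by
  have e1 : (2 * k + 1) * b = (2 * k + 1) * a + (2 * k + 1) * (b - a) := by ring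
  have e2 : (2 * k + 1) * c = (2 * k + 1) * a + (2 * k + 1) * (c - a) := by ring
  rw [e1, e2]
  rw [e2] at hF
  unfold med3 at hF
  generalize (2 * k + 1) * a = Z at *
  rcases diff_cases hab with rfl | rfl | rfl <;> rcases diff_cases hac with rfl | rfl | rfl <;>
    first
    | (exfalso; rw [abs_le] at hcb; omega)
    | (ring_nf at hF ⊢; omega)

/-- Near `p`, the two interpolations have a common far vertex; elsewhere they agree. -/
lemma local_form {n : ℕ} {Y : Set (Fin n → ℤ)} (k : ℤ) (hk : 1 ≤ k) (f g : ℤ → Fin n → ℤ) (p : ℤ)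
    (hY : ∀ i, f i ∈ Y) (hf : ∀ i, adj (f i) (f (i + 1))) (hg : ∀ i, adj (g i) (g (i + 1)))
    (hne : ∀ i, i ≠ p → f i = g i) (j : ℤ) :
    lin k f j = lin k g j ∨
    ∃ s w, 0 ≤ s ∧ s ≤ 2 * k + 1 ∧ w ∈ Y ∧ adj (f p) w ∧ adj (g p) w ∧
      (∀ c, lin k f j c = (2 * k + 1) * f p c + k + s * (w c - f p c)) ∧
      (∀ c, lin k g j c = (2 * k + 1) * g p c + k + s * (w c - g p c)) := by
  obtain ⟨q, s, h0, h1, rfl⟩ := exists_pos k hk j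
  by_cases hq : q = p
  · subst hq
    right
    have e := hne (q + 1) (by omega)
    refine ⟨s, f (q + 1), h0, by omega, hY _, hf q, e ▸ hg q, fun c => ?_, fun c => ?_⟩
    · exact lin_at k hk f q s h0 (by omega) c
    · rw [e]; exact lin_at k hk g q s h0 (by omega) c
  by_cases hq' : q + 1 = p
  · subst hq'
    right
    have e := hne q (by omega)
    refine ⟨2 * k + 1 - s, f q, by omega, by omega, hY _, fun c => ?_, fun c => ?_,
      fun c => ?_, fun c => ?_⟩
    · rw [abs_sub_comm]; exact hf q c
    · rw [abs_sub_comm, e]; exact hg q c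
    · rw [lin_at k hk f q s h0 (by omega) c]; ring
    · rw [e, lin_at k hk g q s h0 (by omega) c]; ring
  · left
    funext c
    rw [lin_at k hk f q s h0 (by omega), lin_at k hk g q s h0 (by omega), hne q hq,
      hne (q + 1) hq']

lemma lin_base {n : ℕ} (k M : ℤ) (hk : 1 ≤ k) (f : ℤ → Fin n → ℤ) (y₀ : Fin n → ℤ)
    (h0 : ∀ i ≤ 0, f i = y₀) (hM : ∀ i, M ≤ i → f i = y₀) :
    lin k f 0 = barPt k y₀ ∧ lin k f ((2 * k + 1) * M + 2 * k) = barPt k y₀ := by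
  constructor
  · funext c
    have e : (0 : ℤ) = (2 * k + 1) * (-1) + k + (k + 1) := by ring
    rw [e, lin_at k hk f (-1) (k + 1) (by omega) (by omega), h0 (-1) (by omega),
      h0 (-1 + 1) (by omega)]
    simp [barPt]
  · funext c
    have e : (2 * k + 1) * M + 2 * k = (2 * k + 1) * M + k + k := by ring
    rw [e, lin_at k hk f M k (by omega) (by omega), hM M le_rfl, hM (M + 1) (by omega)]
    simp [barPt]

/-- A based sequence in `Y`, constant outside `[0, M]`. -/
def GoodPath {n : ℕ} (Y : Set (Fin n → ℤ)) (M : ℤ) (y₀ : Fin n → ℤ) (f : ℤ → Fin n → ℤ) : Prop :=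
  (∀ i, f i ∈ Y) ∧ (∀ i, adj (f i) (f (i + 1))) ∧ (∀ i ≤ 0, f i = y₀) ∧ (∀ i, M ≤ i → f i = y₀)

lemma single_step {n : ℕ} {Y : Set (Fin n → ℤ)} (k M : ℤ) (hk : 1 ≤ k) (f g : ℤ → Fin n → ℤ)
    (y₀ : Fin n → ℤ) (p : ℤ) (hf : GoodPath Y M y₀ f) (hg : GoodPath Y M y₀ g)
    (hne : ∀ i, i ≠ p → f i = g i) (hp : adj (f p) (g p)) :
    BasedLoopHomotopic ((2 * k + 1) * M + 2 * k) (Subdiv Y (2 * k + 1)) (barPt k y₀)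
      (lin k f) (lin k g) := by
  obtain ⟨hf1, hf2, hf3, hf4⟩ := hf
  obtain ⟨hg1, hg2, hg3, hg4⟩ := hg
  have hloc := local_form k hk f g p hf1 hf2 hg2 hne
  obtain ⟨bf0, bfM⟩ := lin_base k M hk f y₀ hf3 hf4
  obtain ⟨bg0, bgM⟩ := lin_base k M hk g y₀ hg3 hg4
  refine ⟨2 * k + 1, by omega, fun x t c => med3 (lin k f x c) (lin k g x c)
    ((2 * k + 1) * f p c + k + t * (g p c - f p c)), ?_, ?_, ?_, ?_, ?_, ?_⟩
  · intro x _ t ht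
    rcases hloc x with h | ⟨s, w, h0, h1, hw, ha, hb, e1, e2⟩
    · simp only [h, med3_self]
      exact lin_mem k hk g hg1 hg2 x
    · have key := fun c => med3_scalar k (f p c) (w c) (g p c) s t hk (ha c) (hp c) (hb c) h0 h1
        ht.1 ht.2 _ rfl
      simp only [e1, e2]
      by_cases hs : s ≤ k
      · by_cases htk : t ≤ k
        · exact mem_subdiv hk (hf1 p) fun c => (key c).2.2.1 hs htk
        · exact mem_subdiv hk (hg1 p) fun c => (key c).2.2.2.1 hs (by omega)
      · exact mem_subdiv hk hw fun c => (key c).2.2.2.2 (by omega)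
  · intro x _ t _ x' _ t' _ hx ht c
    refine med3_lip (lin_lip k hk f hf2 x x' hx c) (lin_lip k hk g hg2 x x' hx c) ?_
    have e : (2 * k + 1) * f p c + k + t * (g p c - f p c)
        - ((2 * k + 1) * f p c + k + t' * (g p c - f p c)) = (t - t') * (g p c - f p c) := by ring
    rw [e, abs_mul]
    have := hp c
    rw [abs_sub_comm] at this
    exact mul_le_one₀ ht (abs_nonneg _) this
  · intro x _
    funext c
    rcases hloc x with h | ⟨s, w, h0, h1, hw, ha, hb, e1, e2⟩
    · simp only [h, med3_self]
    · simp only [e1, e2]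
      exact (med3_scalar k (f p c) (w c) (g p c) s 0 hk (ha c) (hp c) (hb c) h0 h1
        (by omega) (by omega) _ rfl).1 rfl
  · intro x _
    funext c
    rcases hloc x with h | ⟨s, w, h0, h1, hw, ha, hb, e1, e2⟩
    · simp only [h, med3_self]
    · simp only [e1, e2]
      exact (med3_scalar k (f p c) (w c) (g p c) s (2 * k + 1) hk (ha c) (hp c) (hb c) h0 h1
        (by omega) (by omega) _ rfl).2.1 rfl
  · intro t _
    simp only [bf0, bg0, med3_self]
  · intro t _
    simp only [bfM, bgM, med3_self]

lemma blh_trans {n : ℕ} {L : ℤ} {Y : Set (Fin n → ℤ)} {y₀ : Fin n → ℤ} {f g h : ℤ → Fin n → ℤ}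
    (h1 : BasedLoopHomotopic L Y y₀ f g) (h2 : BasedLoopHomotopic L Y y₀ g h) :
    BasedLoopHomotopic L Y y₀ f h := by
  obtain ⟨N, hN, H, a1, a2, a3, a4, a5, a6⟩ := h1
  obtain ⟨N', hN', H', b1, b2, b3, b4, b5, b6⟩ := h2
  have eL : ∀ x t, t ≤ N → (if t ≤ N then H x t else H' x (t - N)) = H x t :=
    fun x t ht => if_pos ht
  have eR : ∀ x ∈ Icc (0 : ℤ) L, ∀ t, N ≤ t →
      (if t ≤ N then H x t else H' x (t - N)) = H' x (t - N) := by
    intro x hx t ht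
    split_ifs with h
    · obtain rfl : t = N := le_antisymm h ht
      rw [a4 x hx, sub_self, b3 x hx]
    · rfl
  refine ⟨N + N', by omega, fun x t => if t ≤ N then H x t else H' x (t - N),
    ?_, ?_, ?_, ?_, ?_, ?_⟩
  · intro x hx t ht
    have := ht.1; have := ht.2
    dsimp only
    by_cases h : t ≤ N
    · rw [eL _ _ h]; exact a1 x hx t ⟨by omega, h⟩
    · rw [eR x hx t (by omega)]; exact b1 x hx _ ⟨by omega, by omega⟩
  · intro x hx t ht x' hx' t' ht' hxx htt
    have := ht.1; have := ht.2; have := ht'.1; have := ht'.2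
    have htt' := abs_le.mp htt
    dsimp only
    by_cases h : t ≤ N ∧ t' ≤ N
    · rw [eL _ _ h.1, eL _ _ h.2]
      exact a2 x hx t ⟨by omega, h.1⟩ x' hx' t' ⟨by omega, h.2⟩ hxx htt
    · have : N ≤ t ∧ N ≤ t' := by omega
      rw [eR x hx t this.1, eR x' hx' t' this.2]
      refine b2 x hx _ ⟨by omega, by omega⟩ x' hx' _ ⟨by omega, by omega⟩ hxx ?_
      rw [abs_le]; omega
  · intro x hx
    dsimp only
    rw [eL _ _ (by omega)]; exact a3 x hx
  · intro x hx
    dsimp only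
    rw [eR x hx _ (by omega), add_sub_cancel_left]; exact b4 x hx
  · intro t ht
    dsimp only
    have := ht.1; have := ht.2
    split_ifs with h
    · exact a5 t ⟨by omega, h⟩
    · exact b5 _ ⟨by omega, by omega⟩
  · intro t ht
    dsimp only
    have := ht.1; have := ht.2
    split_ifs with h
    · exact a6 t ⟨by omega, h⟩
    · exact b6 _ ⟨by omega, by omega⟩

lemma full_step {n : ℕ} {Y : Set (Fin n → ℤ)} (k M : ℤ) (hk : 1 ≤ k) (hM : 1 ≤ M)
    (f g : ℤ → Fin n → ℤ) (y₀ : Fin n → ℤ) (hf : GoodPath Y M y₀ f) (hg : GoodPath Y M y₀ g)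
    (hfg : ∀ i i', |i - i'| ≤ 1 → adj (f i) (g i')) :
    BasedLoopHomotopic ((2 * k + 1) * M + 2 * k) (Subdiv Y (2 * k + 1)) (barPt k y₀)
      (lin k f) (lin k g) := by
  have hgood : ∀ m : ℕ, GoodPath Y M y₀ (fun i => if i < (m : ℤ) then g i else f i) := by
    intro m
    obtain ⟨hf1, hf2, hf3, hf4⟩ := hf
    obtain ⟨hg1, hg2, hg3, hg4⟩ := hg
    refine ⟨fun i => ?_, fun i => ?_, fun i hi => ?_, fun i hi => ?_⟩
    · dsimp only; split_ifs
      · exact hg1 i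
      · exact hf1 i
    · dsimp only; split_ifs
      · exact hg2 i
      · intro c
        rw [abs_sub_comm]
        exact hfg (i + 1) i (by simp) c
      · omega
      · exact hf2 i
    · dsimp only; rw [hf3 i hi, hg3 i hi, ite_self]
    · dsimp only; rw [hf4 i hi, hg4 i hi, ite_self]
  have hind : ∀ m : ℕ, BasedLoopHomotopic ((2 * k + 1) * M + 2 * k) (Subdiv Y (2 * k + 1))
      (barPt k y₀) (lin k f) (lin k (fun i => if i < (m : ℤ) then g i else f i)) := by
    intro m
    induction m with
    | zero =>
      refine single_step k M hk f _ y₀ 0 hf (hgood 0) (fun i _ => ?_) ?_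
      · split_ifs with h
        · rw [hf.2.2.1 i (by simp at h; omega), hg.2.2.1 i (by simp at h; omega)]
        · rfl
      · intro c; simp
    | succ m ih =>
      refine blh_trans ih (single_step k M hk _ _ y₀ (m : ℤ) (hgood m) (hgood (m + 1))
        (fun i hi => ?_) ?_)
      · skip
        have : i < (m : ℤ) ↔ i < ((m + 1 : ℕ) : ℤ) := by push_cast; omega
        simp only [this]
      · simpa using hfg m m (by simp)
  have e : (fun i => if i < (M.toNat : ℤ) then g i else f i) = g := by
    funext i
    split_ifs with h
    · rfl
    · rw [hf.2.2.2 i (by omega), hg.2.2.2 i (by omega)]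
  have := hind M.toNat
  rwa [e] at this

lemma clamp_mem (M : ℤ) (hM : 1 ≤ M) (i : ℤ) : clampI M i ∈ Icc (0 : ℤ) M := by
  unfold clampI; constructor <;> omega

lemma clamp_lip (M i j : ℤ) (h : |i - j| ≤ 1) : |clampI M i - clampI M j| ≤ 1 := by
  unfold clampI; rw [abs_le] at *; omega

lemma good_clamp {n : ℕ} {Y : Set (Fin n → ℤ)} (M : ℤ) (hM : 1 ≤ M) (α : ℤ → Fin n → ℤ)
    (y₀ : Fin n → ℤ) (hmaps : ∀ i ∈ Icc (0 : ℤ) M, α i ∈ Y)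
    (hcont : ∀ i ∈ Icc (0 : ℤ) M, ∀ i' ∈ Icc (0 : ℤ) M, |i - i'| ≤ 1 → adj (α i) (α i'))
    (h0 : α 0 = y₀) (h1 : α M = y₀) : GoodPath Y M y₀ (fun i => α (clampI M i)) := by
  refine ⟨fun i => hmaps _ (clamp_mem M hM i), fun i => hcont _ (clamp_mem M hM i) _
    (clamp_mem M hM _) (clamp_lip M _ _ (by simp)), fun i hi => ?_, fun i hi => ?_⟩
  · have : clampI M i = 0 := by unfold clampI; omega
    simp only [this, h0]
  · have : clampI M i = M := by unfold clampI; omega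
    simp only [this, h1]

lemma blh_covers {n : ℕ} {Y : Set (Fin n → ℤ)} (k M : ℤ) (hk : 1 ≤ k) (hM : 1 ≤ M)
    (α β : ℤ → Fin n → ℤ) (y₀ : Fin n → ℤ) (h : BasedLoopHomotopic M Y y₀ α β) :
    BasedLoopHomotopic ((2 * k + 1) * M + 2 * k) (Subdiv Y (2 * k + 1))
      (barPt k y₀) (lin k (fun i => α (clampI M i))) (lin k (fun i => β (clampI M i))) := by
  obtain ⟨N, hN, H, a1, a2, a3, a4, a5, a6⟩ := h
  have hgood : ∀ t ∈ Icc (0 : ℤ) N, GoodPath Y M y₀ (fun i => H (clampI M i) t) := by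
    intro t ht
    exact good_clamp M hM (fun i => H i t) y₀ (fun i hi => a1 i hi t ht)
      (fun i hi i' hi' hh => a2 i hi t ht i' hi' t ht hh (by simp)) (a5 t ht) (a6 t ht)
  have hind : ∀ m : ℕ, (m : ℤ) ≤ N → BasedLoopHomotopic ((2 * k + 1) * M + 2 * k)
      (Subdiv Y (2 * k + 1)) (barPt k y₀) (lin k (fun i => H (clampI M i) 0))
      (lin k (fun i => H (clampI M i) m)) := by
    intro m
    induction m with
    | zero =>
      intro _
      have z : (0 : ℤ) ∈ Icc (0 : ℤ) N := ⟨le_rfl, by omega⟩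
      exact full_step k M hk hM _ _ y₀ (hgood 0 z) (hgood 0 z) fun i i' hh =>
        a2 _ (clamp_mem M hM i) 0 z _ (clamp_mem M hM i') 0 z (clamp_lip M i i' hh) (by simp)
    | succ m ih =>
      intro hm
      push_cast at hm ⊢
      have z : (m : ℤ) ∈ Icc (0 : ℤ) N := ⟨by omega, by omega⟩
      have z' : (m : ℤ) + 1 ∈ Icc (0 : ℤ) N := ⟨by omega, by omega⟩
      refine blh_trans (ih (by omega)) ?_
      exact full_step k M hk hM _ _ y₀ (hgood _ z) (hgood _ z') fun i i' hh =>
        a2 _ (clamp_mem M hM i) _ z _ (clamp_mem M hM i') _ z' (clamp_lip M i i' hh) (by simp)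
  have := hind N.toNat (by omega)
  rw [Int.toNat_of_nonneg (by omega)] at this
  have e1 : (fun i => H (clampI M i) 0) = fun i => α (clampI M i) := by
    funext i; exact a3 _ (clamp_mem M hM i)
  have e2 : (fun i => H (clampI M i) N) = fun i => β (clampI M i) := by
    funext i; exact a4 _ (clamp_mem M hM i)
  rwa [e1, e2] at this

/-- if `α, β : I_M → Y` are loops based at `y₀`, then their standard
covers are loops of length `L = (2k+1)M + 2k` in `S(Y,2k+1)` based at
`ȳ₀ = (2k+1)y₀ + (k,…,k)`, and if `α ≃ β` via a based homotopy of based loops, so are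
`α̂` and `β̂`. -/
theorem covers_based_loop_homotopic {n : ℕ} (Y : Set (Fin n → ℤ)) (hY : Y.Finite)
    (M k : ℤ) (hM : 1 ≤ M) (hk : 1 ≤ k)
    (α β : ℤ → Fin n → ℤ) (y₀ : Fin n → ℤ)
    (hαmaps : ∀ i ∈ Icc (0 : ℤ) M, α i ∈ Y)
    (hαcont : ∀ i ∈ Icc (0 : ℤ) M, ∀ i' ∈ Icc (0 : ℤ) M, |i - i'| ≤ 1 → adj (α i) (α i'))
    (hβmaps : ∀ i ∈ Icc (0 : ℤ) M, β i ∈ Y)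
    (hβcont : ∀ i ∈ Icc (0 : ℤ) M, ∀ i' ∈ Icc (0 : ℤ) M, |i - i'| ≤ 1 → adj (β i) (β i'))
    (hα0 : α 0 = y₀) (hαM : α M = y₀) (hβ0 : β 0 = y₀) (hβM : β M = y₀) :
    (cover k M α 0 = barPt k y₀ ∧ cover k M α ((2 * k + 1) * M + 2 * k) = barPt k y₀) ∧
    (cover k M β 0 = barPt k y₀ ∧ cover k M β ((2 * k + 1) * M + 2 * k) = barPt k y₀) ∧
    (∀ j ∈ Icc (0 : ℤ) ((2 * k + 1) * M + 2 * k), cover k M α j ∈ Subdiv Y (2 * k + 1)) ∧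
    (∀ j ∈ Icc (0 : ℤ) ((2 * k + 1) * M + 2 * k), cover k M β j ∈ Subdiv Y (2 * k + 1)) ∧
    (BasedLoopHomotopic M Y y₀ α β →
      BasedLoopHomotopic ((2 * k + 1) * M + 2 * k) (Subdiv Y (2 * k + 1))
        (barPt k y₀) (cover k M α) (cover k M β)) := by
  have gα := good_clamp M hM α y₀ hαmaps hαcont hα0 hαM
  have gβ := good_clamp M hM β y₀ hβmaps hβcont hβ0 hβM
  have eα : cover k M α = lin k (fun i => α (clampI M i)) :=
    funext fun j => cover_eq_lin k M hk hM α j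
  have eβ : cover k M β = lin k (fun i => β (clampI M i)) :=
    funext fun j => cover_eq_lin k M hk hM β j
  rw [eα, eβ]
  exact ⟨lin_base k M hk _ y₀ gα.2.2.1 gα.2.2.2, lin_base k M hk _ y₀ gβ.2.2.1 gβ.2.2.2,
    fun j _ => lin_mem k hk _ gα.1 gα.2.1 j, fun j _ => lin_mem k hk _ gβ.1 gβ.2.1 j,
    blh_covers k M hk hM α β y₀⟩
end
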